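/- p-entropy hypocoercivity for the kinetic Fokker–Planck equation: for each p ∈ (1,2] there exists an explicit constant k > 0 such that for every smooth h : [0,∞) × 𝕋^d × ℝ^d → ℝ that is bounded above and below by positive constants, has all partial derivatives bounded, satisfies ∫ h(t,·) dμ = 1 for all t, and solves ∂_t h + v·∇_x h = Δ_v h − v·∇_v h, one has for all t ≥ 0: I^{(p)}(h_t) + (27/2) H^{(p)}(h_t) ≤ e^{−kt} (3 I^{(p)}(h_0) + (27/2) H^{(p)}(h_0)); consequently there is a constant C with H^{(p)}(h_t) ≤ C e^{−kt} I^{(p)}(h_0). -/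

import Mathlib

/-!
The proof is a Bakry–Émery computation for a twisted Fisher information, closed by a functional
inequality. Write `LL = ∂_t + v·∇_x + v·∇_v - Δ_v`, so that `LL h = 0`, and let `α = p - 2`,
`ξ = ∂_{xⱼ} h`, `η = ∂_{vⱼ} h`.

Differentiating the equation gives `LL ξ = 0` and `LL η = LL (ξ + η) = -(ξ + η)` (`LL_Dr`). Since
`(y, z) ↦ y^α z²` is jointly convex for `p ∈ (1,2]`, one has `LL (h^α z²) ≤ 2 h^α z LL z`
(`LL_quad_le`), while `LL ((h^p - h)/(p(p-1))) = -h^α |∇_v h|²` (`LL_rpow`). Hence the functional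
`F = ∫ ∑ⱼ h^α (ξ² + η² + (ξ+η)²) + (27/2) (h^p - h)/(p(p-1)) dμ` has pointwise dissipation at least
`h^α |∇_{x,v} h|²` (`LL_functional_le`). The measure `μ` is invariant, so that `d/dt ∫ f dμ = ∫ LL f dμ`
(`hasDerivAt_J`), and therefore `F' ≤ -I^{(p)}`. Moreover
`I^{(p)} + (27/2) H^{(p)} ≤ F ≤ 3 I^{(p)} + (27/2) H^{(p)}`.

It remains to bound `H^{(p)}` by `K I^{(p)}`. This is the Poincaré inequality for `μ` applied to
`h^{p/2}`, together with `∫ h^{p/2} dμ ≤ 1` (`beckner`). The Poincaré inequality is proved by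
interpolating between two independent points along a path that rotates the Gaussian variables and
translates on the torus (`poincare`). Gronwall's inequality then gives the decay with rate
`k = 1 / (3 + (27/2) K)`.
-/

open MeasureTheory Real Filter

noncomputable section

/-- The standard Gaussian density `ℳ(v) = (2π)^{-d/2} exp(-|v|²/2)` on `ℝ^d`. -/
def gauss (d : ℕ) (v : Fin d → ℝ) : ℝ :=
  (2 * Real.pi) ^ (-(d : ℝ) / 2) * Real.exp (-(∑ i, v i ^ 2) / 2)

/-- Fundamental domain `[0,1]^d` of the torus `𝕋^d`; the normalized Lebesgue measure on
the torus is the restriction of Lebesgue measure to this cube. -/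
def cube (d : ℕ) : Set (Fin d → ℝ) := Set.Icc 0 1

/-- A function of `(x,v)` represents a function on `𝕋^d × ℝ^d` iff it is `ℤ^d`-periodic in `x`. -/
def IsPeriodic (d : ℕ) (f : (Fin d → ℝ) → (Fin d → ℝ) → ℝ) : Prop :=
  ∀ (x v : Fin d → ℝ) (k : Fin d → ℤ), f (x + fun i => (k i : ℝ)) v = f x v

/-- The projection `Πf(x) = ∫ f(x,u) ℳ(u) du`. -/
def proj (d : ℕ) (f : (Fin d → ℝ) → (Fin d → ℝ) → ℝ) (x : Fin d → ℝ) : ℝ :=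
  ∫ u, f x u * gauss d u

/-- Euclidean dot product on `ℝ^d`. -/
def dotp (d : ℕ) (a b : Fin d → ℝ) : ℝ := ∑ i, a i * b i

/-- Squared Euclidean norm on `ℝ^d`. -/
def nsq (d : ℕ) (a : Fin d → ℝ) : ℝ := ∑ i, a i ^ 2

/-- Gradient in the `x` variable. -/
def gradx (d : ℕ) (f : (Fin d → ℝ) → (Fin d → ℝ) → ℝ) (x v : Fin d → ℝ) : Fin d → ℝ :=
  fun i => fderiv ℝ (fun y => f y v) x (Pi.single i 1)

/-- Gradient in the `v` variable. -/
def gradv (d : ℕ) (f : (Fin d → ℝ) → (Fin d → ℝ) → ℝ) (x v : Fin d → ℝ) : Fin d → ℝ :=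
  fun i => fderiv ℝ (fun w => f x w) v (Pi.single i 1)

/-- Gradient of a function of `x` only. -/
def grad1 (d : ℕ) (g : (Fin d → ℝ) → ℝ) (x : Fin d → ℝ) : Fin d → ℝ :=
  fun i => fderiv ℝ g x (Pi.single i 1)

/-- Laplacian in the `v` variable. -/
def lapv (d : ℕ) (f : (Fin d → ℝ) → (Fin d → ℝ) → ℝ) (x v : Fin d → ℝ) : ℝ :=
  ∑ i, fderiv ℝ (fun w => gradv d f x w i) v (Pi.single i 1)

/-- Integral against `μ = ℳ(v) dv dx` on `𝕋^d × ℝ^d`. -/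
def intMu (d : ℕ) (F : (Fin d → ℝ) → (Fin d → ℝ) → ℝ) : ℝ :=
  ∫ x in cube d, ∫ v, F x v * gauss d v

/-- `I^X(h) = ∫ |∇_x h|²/h dμ`. -/
def IX (d : ℕ) (h : (Fin d → ℝ) → (Fin d → ℝ) → ℝ) : ℝ :=
  intMu d fun x v => nsq d (gradx d h x v) / h x v

/-- `I^V(h) = ∫ |∇_v h|²/h dμ`. -/
def IV (d : ℕ) (h : (Fin d → ℝ) → (Fin d → ℝ) → ℝ) : ℝ :=
  intMu d fun x v => nsq d (gradv d h x v) / h x v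

/-- `I^M(h) = ∫ (∇_x h · ∇_v h)/h dμ`. -/
def IM (d : ℕ) (h : (Fin d → ℝ) → (Fin d → ℝ) → ℝ) : ℝ :=
  intMu d fun x v => dotp d (gradx d h x v) (gradv d h x v) / h x v

/-- The full Fisher information `I(h) = ∫ |∇_{x,v} h|²/h dμ`. -/
def Ifull (d : ℕ) (h : (Fin d → ℝ) → (Fin d → ℝ) → ℝ) : ℝ :=
  intMu d fun x v => (nsq d (gradx d h x v) + nsq d (gradv d h x v)) / h x v

/-- `I^{ΠX}(h) = ∫_{𝕋^d} |∇_x Πh|²/Πh dx`. -/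
def IPiX (d : ℕ) (h : (Fin d → ℝ) → (Fin d → ℝ) → ℝ) : ℝ :=
  ∫ x in cube d, nsq d (grad1 d (proj d h) x) / proj d h x

/-- `I^{ΠX/X}(h) = ∫ (|∇_x(Πh/h)|²/(Πh/h)) h dμ`. -/
def IPiXX (d : ℕ) (h : (Fin d → ℝ) → (Fin d → ℝ) → ℝ) : ℝ :=
  intMu d fun x v =>
    nsq d (gradx d (fun y w => proj d h y / h y w) x v) / (proj d h x / h x v) * h x v

/-- `I^{ΠV/V}(h) = ∫ (|∇_v h|²/h)(Πh/h) dμ`. -/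
def IPiVV (d : ℕ) (h : (Fin d → ℝ) → (Fin d → ℝ) → ℝ) : ℝ :=
  intMu d fun x v => nsq d (gradv d h x v) / h x v * (proj d h x / h x v)

/-- The relative entropy `H(h) = ∫ h log h dμ`. -/
def Hent (d : ℕ) (h : (Fin d → ℝ) → (Fin d → ℝ) → ℝ) : ℝ :=
  intMu d fun x v => h x v * Real.log (h x v)

/-- The projected entropy `H_Π(h) = ∫_{𝕋^d} Πh log Πh dx`. -/
def HPi (d : ℕ) (h : (Fin d → ℝ) → (Fin d → ℝ) → ℝ) : ℝ :=
  ∫ x in cube d, proj d h x * Real.log (proj d h x)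

/-- The local average speed `U(x) = ∫ v h(x,v) ℳ(v) dv`. -/
def Uvec (d : ℕ) (h : (Fin d → ℝ) → (Fin d → ℝ) → ℝ) (x : Fin d → ℝ) : Fin d → ℝ :=
  fun i => ∫ v, v i * h x v * gauss d v

/-- The divergence `∇_x · U`. -/
def divU (d : ℕ) (h : (Fin d → ℝ) → (Fin d → ℝ) → ℝ) (x : Fin d → ℝ) : ℝ :=
  ∑ i, fderiv ℝ (fun y => Uvec d h y i) x (Pi.single i 1)

/-- The `p`-entropy `H^{(p)}(h) = ∫ (h^p - h)/(p(p-1)) dμ`. -/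
def Hp (d : ℕ) (p : ℝ) (h : (Fin d → ℝ) → (Fin d → ℝ) → ℝ) : ℝ :=
  intMu d fun x v => (h x v ^ p - h x v) / (p * (p - 1))

/-- The projected `p`-entropy `H_Π^{(p)}(h) = ∫_{𝕋^d} ((Πh)^p - Πh)/(p(p-1)) dx`. -/
def HpPi (d : ℕ) (p : ℝ) (h : (Fin d → ℝ) → (Fin d → ℝ) → ℝ) : ℝ :=
  ∫ x in cube d, ((proj d h x) ^ p - proj d h x) / (p * (p - 1))

/-- The `p`-Fisher information `I^{(p)}(h) = ∫ h^{p-2} |∇_{x,v} h|² dμ`. -/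
def Ipfull (d : ℕ) (p : ℝ) (h : (Fin d → ℝ) → (Fin d → ℝ) → ℝ) : ℝ :=
  intMu d fun x v => h x v ^ (p - 2) * (nsq d (gradx d h x v) + nsq d (gradv d h x v))

/-- The spatial `p`-Fisher information `∫ h^{p-2} |∇_x h|² dμ`. -/
def IpX (d : ℕ) (p : ℝ) (h : (Fin d → ℝ) → (Fin d → ℝ) → ℝ) : ℝ :=
  intMu d fun x v => h x v ^ (p - 2) * nsq d (gradx d h x v)

/-- Regularity of a time-dependent `h`: smooth, periodic in `x`, bounded above and below by
positive constants, with all partial derivatives bounded. -/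
def Regular (d : ℕ) (h : ℝ → (Fin d → ℝ) → (Fin d → ℝ) → ℝ) : Prop :=
  ContDiff ℝ (⊤ : ℕ∞) (fun q : ℝ × (Fin d → ℝ) × (Fin d → ℝ) => h q.1 q.2.1 q.2.2) ∧
  (∀ t, IsPeriodic d (h t)) ∧
  (∃ c C : ℝ, 0 < c ∧ ∀ t x v, c ≤ h t x v ∧ h t x v ≤ C) ∧
  (∀ n : ℕ, ∃ C : ℝ, ∀ q : ℝ × (Fin d → ℝ) × (Fin d → ℝ),
    ‖iteratedFDeriv ℝ n (fun r : ℝ × (Fin d → ℝ) × (Fin d → ℝ) => h r.1 r.2.1 r.2.2) q‖ ≤ C)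

/-- Regularity of a time-independent `h`: smooth, periodic in `x`, bounded above and below by
positive constants, with bounded gradient. -/
def RegularStatic (d : ℕ) (h : (Fin d → ℝ) → (Fin d → ℝ) → ℝ) : Prop :=
  ContDiff ℝ (⊤ : ℕ∞) (fun q : (Fin d → ℝ) × (Fin d → ℝ) => h q.1 q.2) ∧
  IsPeriodic d h ∧
  (∃ c C : ℝ, 0 < c ∧ ∀ x v, c ≤ h x v ∧ h x v ≤ C) ∧
  (∃ C : ℝ, ∀ q : (Fin d → ℝ) × (Fin d → ℝ),
    ‖fderiv ℝ (fun r : (Fin d → ℝ) × (Fin d → ℝ) => h r.1 r.2) q‖ ≤ C)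

/-- `h` solves the linear relaxation Boltzmann equation `∂_t h + v·∇_x h = λ(Πh - h)` for `t ≥ 0`. -/
def SolvesLRB (d : ℕ) (lam : ℝ) (h : ℝ → (Fin d → ℝ) → (Fin d → ℝ) → ℝ) : Prop :=
  ∀ t x v, 0 ≤ t →
    deriv (fun s => h s x v) t + dotp d v (gradx d (h t) x v)
      = lam * (proj d (h t) x - h t x v)

/-- `h` solves the free transport equation `∂_t h + v·∇_x h = 0` for `t ≥ 0`. -/
def SolvesTransport (d : ℕ) (h : ℝ → (Fin d → ℝ) → (Fin d → ℝ) → ℝ) : Prop :=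
  ∀ t x v, 0 ≤ t →
    deriv (fun s => h s x v) t + dotp d v (gradx d (h t) x v) = 0

/-- `h` solves the pure relaxation equation `∂_t h = λ(Πh - h)` for `t ≥ 0`. -/
def SolvesCollision (d : ℕ) (lam : ℝ) (h : ℝ → (Fin d → ℝ) → (Fin d → ℝ) → ℝ) : Prop :=
  ∀ t x v, 0 ≤ t →
    deriv (fun s => h s x v) t = lam * (proj d (h t) x - h t x v)

/-- `h` solves the kinetic Fokker–Planck equation `∂_t h + v·∇_x h = Δ_v h - v·∇_v h` for `t ≥ 0`. -/
def SolvesKFP (d : ℕ) (h : ℝ → (Fin d → ℝ) → (Fin d → ℝ) → ℝ) : Prop :=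
  ∀ t x v, 0 ≤ t →
    deriv (fun s => h s x v) t + dotp d v (gradx d (h t) x v)
      = lapv d (h t) x v - dotp d v (gradv d (h t) x v)

section

/-! ### The Gaussian and the torus -/

/-- The space `ℝ^d` of positions (lifted from the torus) or of velocities. -/
abbrev V (d : ℕ) : Type := Fin d → ℝ

/-- The Gaussian measure `ℳ(v) dv`, as a product of one-dimensional standard Gaussians. -/
def gm (d : ℕ) : Measure (V d) := Measure.pi fun _ => ProbabilityTheory.gaussianReal 0 1

lemma gauss_eq_prod (d : ℕ) (v : V d) :
    gauss d v = ∏ i, ProbabilityTheory.gaussianPDFReal 0 1 (v i) := by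
  have h2 : (0:ℝ) ≤ 2 * π := by positivity
  simp only [gauss, ProbabilityTheory.gaussianPDFReal, Finset.prod_mul_distrib, ← Real.exp_sum]
  congr 1
  · simp only [Finset.prod_const, Finset.card_univ, Fintype.card_fin, NNReal.coe_one, mul_one]
    rw [Real.sqrt_eq_rpow, ← Real.rpow_neg h2, ← Real.rpow_natCast, ← Real.rpow_mul h2]
    congr 1; ring
  · simp [Finset.sum_div, Finset.sum_neg_distrib, neg_div]

lemma gauss_pos (d : ℕ) (v : V d) : 0 < gauss d v := by
  unfold gauss; positivity

lemma gauss_contDiff (d : ℕ) : ContDiff ℝ ⊤ (gauss d) := by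
  unfold gauss; fun_prop

lemma gauss_integrable (d : ℕ) : Integrable (gauss d) := by
  have : gauss d = fun v => ∏ i, ProbabilityTheory.gaussianPDFReal 0 1 (v i) :=
    funext (gauss_eq_prod d)
  rw [this]
  exact Integrable.fintype_prod (fun _ => ProbabilityTheory.integrable_gaussianPDFReal 0 1)

lemma gm_eq (d : ℕ) : gm d = volume.withDensity (fun v => ENNReal.ofReal (gauss d v)) := by
  refine Measure.pi_eq fun s hs => ?_
  rw [withDensity_apply _ (MeasurableSet.univ_pi hs),
    ← ofReal_integral_eq_lintegral_ofReal (gauss_integrable d).integrableOn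
      (ae_of_all _ fun v => (gauss_pos d v).le)]
  simp_rw [gauss_eq_prod, ProbabilityTheory.gaussianReal_apply_eq_integral 0 one_ne_zero]
  rw [volume_pi, Measure.restrict_pi_pi, integral_fintype_prod_eq_prod
    (f := fun _ x => ProbabilityTheory.gaussianPDFReal 0 1 x)]
  refine ENNReal.ofReal_prod_of_nonneg fun i _ => integral_nonneg fun x =>
    ProbabilityTheory.gaussianPDFReal_nonneg _ _ _

lemma integral_gm (d : ℕ) (f : V d → ℝ) : ∫ v, f v ∂gm d = ∫ v, f v * gauss d v := by
  rw [gm_eq, integral_withDensity_eq_integral_toReal_smul]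
  · refine integral_congr_ae (ae_of_all _ fun v => ?_)
    simp [ENNReal.toReal_ofReal (gauss_pos d v).le, mul_comm]
  · exact (gauss_contDiff d).continuous.measurable.ennreal_ofReal
  · exact ae_of_all _ fun v => ENNReal.ofReal_lt_top

lemma integrable_gm (d : ℕ) {f : V d → ℝ} (hf : Integrable f (gm d)) :
    Integrable (fun v => f v * gauss d v) := by
  rw [gm_eq, integrable_withDensity_iff_integrable_smul'] at hf
  · refine hf.congr (ae_of_all _ fun v => ?_)
    simp [ENNReal.toReal_ofReal (gauss_pos d v).le, mul_comm]
  · exact (gauss_contDiff d).continuous.measurable.ennreal_ofReal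
  · exact ae_of_all _ fun v => ENNReal.ofReal_lt_top

instance gm_gaussian (d : ℕ) : ProbabilityTheory.IsGaussian (gm d) := by
  have h : gm d = (ProbabilityTheory.stdGaussian (EuclideanSpace ℝ (Fin d))).map
      (EuclideanSpace.equiv (Fin d) ℝ) := by
    rw [← ProbabilityTheory.map_pi_eq_stdGaussian, Measure.map_map (by fun_prop) (by fun_prop)]
    exact (Measure.map_id).symm
  rw [h]; infer_instance

lemma gm_mean (d : ℕ) : ∫ v, id v ∂gm d = 0 := by
  ext i
  rw [eval_integral]
  · have := integral_comp_eval (μ := fun _ : Fin d => ProbabilityTheory.gaussianReal 0 1)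
      (i := i) (f := fun x : ℝ => x) (by fun_prop)
    simpa [gm] using this
  · intro j
    exact (ContinuousLinearMap.proj (R := ℝ) (φ := fun _ : Fin d => ℝ) j).integrable_comp
      ProbabilityTheory.IsGaussian.integrable_id

/-- A pair of independent standard Gaussians is invariant under the rotations
`(v, w) ↦ (cos θ v + sin θ w, -sin θ v + cos θ w)`. -/
lemma gm_rotation (d : ℕ) (θ : ℝ) :
    ((gm d).prod (gm d)).map (ContinuousLinearMap.rotation θ) = (gm d).prod (gm d) :=
  ProbabilityTheory.IsGaussian.map_rotation_eq_self (gm_mean d) θ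

/-- Normalized Lebesgue measure on the torus, carried by the unit cube. -/
def km (d : ℕ) : Measure (V d) := volume.restrict (cube d)

instance km_prob (d : ℕ) : IsProbabilityMeasure (km d) := by
  constructor
  simp [km, cube, Real.volume_Icc_pi]

/-- Translation invariance on the torus: both the cube and its translate are fundamental domains
of the lattice `ℤ^d`. -/
lemma km_shift (d : ℕ) (f : V d → ℝ)
    (hf : ∀ (x : V d) (k : Fin d → ℤ), f (x + fun i => (k i : ℝ)) = f x) (z : V d) :
    ∫ x, f (x + z) ∂km d = ∫ x, f x ∂km d := by
  set b := Pi.basisFun ℝ (Fin d)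
  have hD := ZSpan.isAddFundamentalDomain' b (volume : Measure (V d))
  have : Countable (Submodule.span ℤ (Set.range b)).toAddSubgroup :=
    inferInstanceAs (Countable (Submodule.span ℤ (Set.range b)))
  have hcube : (cube d : Set (V d)) =ᵐ[volume] ZSpan.fundamentalDomain b := by
    rw [ZSpan.fundamentalDomain_pi_basisFun, volume_pi]
    exact Measure.univ_pi_Ico_ae_eq_Icc.symm
  have hinv : ∀ (g : (Submodule.span ℤ (Set.range b)).toAddSubgroup) (x : V d), f (g +ᵥ x) = f x := by
    intro g x
    obtain ⟨c, hc⟩ := (Submodule.mem_span_range_iff_exists_fun ℤ).1 g.2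
    have : g +ᵥ x = x + fun i => (c i : ℝ) := by
      rw [AddSubgroup.vadd_def, vadd_eq_add, ← hc, add_comm]
      congr 1; ext i
      simp [b, Finset.sum_apply, Pi.single_apply]
    rw [this, hf]
  have h1 : ∫ x, f (x + z) ∂km d = ∫ x in ZSpan.fundamentalDomain b, f (x + z) := by
    rw [km, Measure.restrict_congr_set hcube]
  have h2 : ∫ x, f x ∂km d = ∫ x in ZSpan.fundamentalDomain b, f x := by
    rw [km, Measure.restrict_congr_set hcube]
  rw [h1, h2, hD.setIntegral_eq (hD.vadd_of_comm z) hinv]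
  have := (measurePreserving_add_right (volume : Measure (V d)) z).setIntegral_image_emb
    (measurableEmbedding_addRight z) f (ZSpan.fundamentalDomain b)
  rw [← this]
  congr 2
  exact Set.image_congr fun x _ => add_comm x z

/-- The measure `μ = ℳ(v) dv dx`, as a product measure. -/
def mu (d : ℕ) : Measure (V d × V d) := (km d).prod (gm d)

instance mu_prob (d : ℕ) : IsProbabilityMeasure (mu d) := by unfold mu; infer_instance

/-- Integrability on the product is what allows the iterated integral `intMu` to be read as an
integral against `mu`. -/
lemma intMu_eq (d : ℕ) (F : V d → V d → ℝ) (hF : Integrable (fun z : V d × V d => F z.1 z.2) (mu d)) :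
    intMu d F = ∫ z, F z.1 z.2 ∂mu d := by
  rw [mu, integral_prod _ hF]
  simp only [integral_gm]
  rfl

/-! ### The regularity class -/

/-- Space-time phase space: points `(t, x, v)`. -/
abbrev Q (d : ℕ) : Type := ℝ × V d × V d

/-- The regularity class in which the computations take place: smooth, all derivatives bounded,
and `ℤ^d`-periodic in `x`. -/
structure Nice {d : ℕ} (f : Q d → ℝ) : Prop where
  smooth : ContDiff ℝ (⊤ : ℕ∞) f
  bdd : ∀ n : ℕ, ∃ C : ℝ, ∀ q, ‖iteratedFDeriv ℝ n f q‖ ≤ C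
  per : ∀ (q : Q d) (k : Fin d → ℤ), f (q + (0, (fun i => (k i : ℝ)), 0)) = f q

/-- The derivative of `f` at `q` in the constant direction `e`. -/
def Dr {d : ℕ} (e : Q d) (f : Q d → ℝ) (q : Q d) : ℝ := fderiv ℝ f q e


variable {d : ℕ}

namespace Nice

lemma bounded {f : Q d → ℝ} (hf : Nice f) : ∃ C, ∀ q, |f q| ≤ C := by
  obtain ⟨C, hC⟩ := hf.bdd 0
  exact ⟨C, fun q => by simpa using hC q⟩

lemma fderiv_bounded {f : Q d → ℝ} (hf : Nice f) : ∃ C, 0 ≤ C ∧ ∀ q, ‖fderiv ℝ f q‖ ≤ C := by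
  obtain ⟨C, hC⟩ := hf.bdd 1
  have h : ∀ q, ‖fderiv ℝ f q‖ ≤ C := fun q => by
    have := hC q
    rwa [← norm_iteratedFDeriv_fderiv, norm_iteratedFDeriv_zero] at this
  exact ⟨C, (norm_nonneg _).trans (h 0), h⟩

lemma continuous {f : Q d → ℝ} (hf : Nice f) : Continuous f := hf.smooth.continuous

lemma diff {f : Q d → ℝ} (hf : Nice f) : Differentiable ℝ f :=
  hf.smooth.differentiable (by simp)

lemma const (c : ℝ) : Nice (fun _ : Q d => c) := by
  refine ⟨contDiff_const, fun n => ?_, fun _ _ => rfl⟩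
  rcases n with _ | n
  · exact ⟨‖c‖, fun q => by simp⟩
  · exact ⟨0, fun q => by simp [iteratedFDeriv_const_of_ne]⟩

lemma add {f g : Q d → ℝ} (hf : Nice f) (hg : Nice g) : Nice (fun q => f q + g q) := by
  refine ⟨hf.smooth.add hg.smooth, fun n => ?_, fun q k => by rw [hf.per, hg.per]⟩
  obtain ⟨A, hA⟩ := hf.bdd n
  obtain ⟨B, hB⟩ := hg.bdd n
  refine ⟨A + B, fun q => ?_⟩
  have h1 : ContDiffAt ℝ n f q := (hf.smooth.of_le (by exact_mod_cast le_top)).contDiffAt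
  have h2 : ContDiffAt ℝ n g q := (hg.smooth.of_le (by exact_mod_cast le_top)).contDiffAt
  have : iteratedFDeriv ℝ n (fun q => f q + g q) q
      = iteratedFDeriv ℝ n f q + iteratedFDeriv ℝ n g q := iteratedFDeriv_add_apply h1 h2
  rw [this]
  exact (norm_add_le _ _).trans (add_le_add (hA q) (hB q))

lemma mul {f g : Q d → ℝ} (hf : Nice f) (hg : Nice g) : Nice (fun q => f q * g q) := by
  refine ⟨hf.smooth.mul hg.smooth, fun n => ?_, fun q k => by rw [hf.per, hg.per]⟩
  choose A hA using hf.bdd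
  choose B hB using hg.bdd
  refine ⟨∑ i ∈ Finset.range (n + 1), (n.choose i : ℝ) * A i * B (n - i), fun q => ?_⟩
  refine (norm_iteratedFDeriv_mul_le hf.smooth hg.smooth q
    (n := n) (by exact_mod_cast le_top)).trans ?_
  have hA0 : ∀ i, 0 ≤ A i := fun i => (norm_nonneg _).trans (hA i 0)
  gcongr with i hi
  · exact mul_nonneg (Nat.cast_nonneg _) (hA0 i)
  · exact hA i q
  · exact hB _ q

lemma const_mul (c : ℝ) {f : Q d → ℝ} (hf : Nice f) : Nice (fun q => c * f q) :=
  (const c).mul hf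

lemma sum {ι : Type*} (s : Finset ι) {f : ι → Q d → ℝ} (hf : ∀ i, Nice (f i)) :
    Nice (fun q => ∑ i ∈ s, f i q) := by
  classical
  induction s using Finset.induction_on with
  | empty => simpa using const (d := d) 0
  | insert a s ha ih => simpa [Finset.sum_insert ha] using (hf a).add ih

lemma dr {f : Q d → ℝ} (hf : Nice f) (e : Q d) : Nice (Dr e f) := by
  have hs : ContDiff ℝ (⊤ : ℕ∞) (fderiv ℝ f) := hf.smooth.fderiv_right (by simp)
  refine ⟨hs.clm_apply contDiff_const, fun n => ?_, fun q k => ?_⟩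
  · obtain ⟨C, hC⟩ := hf.bdd (n + 1)
    refine ⟨‖e‖ * C, fun q => ?_⟩
    refine (norm_iteratedFDeriv_clm_apply_const (c := e) hs.contDiffAt
      (n := n) (by exact_mod_cast le_top)).trans ?_
    rw [norm_iteratedFDeriv_fderiv]
    exact mul_le_mul_of_nonneg_left (hC q) (norm_nonneg _)
  · unfold Dr
    rw [← fderiv_comp_add_right]
    congr 2
    exact funext fun q => hf.per q k

/-- Stability under real powers, for functions bounded below by a positive constant: the bounded
derivatives of `y ↦ y ^ s` on a compact interval feed the Faà di Bruno estimate. -/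
lemma rpow {f : Q d → ℝ} (hf : Nice f) {c : ℝ} (hc : 0 < c) (hfc : ∀ q, c ≤ f q) (s : ℝ) :
    Nice (fun q => f q ^ s) := by
  have hne : ∀ q, f q ≠ 0 := fun q => (hc.trans_le (hfc q)).ne'
  refine ⟨hf.smooth.rpow_const_of_ne hne, fun n => ?_, fun q k => by rw [hf.per]⟩
  obtain ⟨M, hM⟩ := hf.bounded
  set t : Set ℝ := Set.Icc c (max c M + 1) with ht
  have hct : c < max c M + 1 := by have := le_max_left c M; linarith
  have hmem : ∀ q, f q ∈ t := fun q => ⟨hfc q, by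
    have := le_max_right c M; have := (le_abs_self _).trans (hM q); linarith⟩
  have hu : UniqueDiffOn ℝ t := uniqueDiffOn_Icc hct
  have hg : ContDiffOn ℝ (⊤ : ℕ∞) (fun x : ℝ => x ^ s) t := fun x hx =>
    (contDiffAt_id.rpow_const_of_ne (hc.trans_le hx.1).ne').contDiffWithinAt
  have hCi : ∀ i : ℕ, ∃ C, ∀ x ∈ t, ‖iteratedFDerivWithin ℝ i (fun x : ℝ => x ^ s) t x‖ ≤ C :=
    fun i => isCompact_Icc.exists_bound_of_continuousOn
      (hg.continuousOn_iteratedFDerivWithin (by exact_mod_cast le_top) hu)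
  choose A hA using hCi
  choose B hB using hf.bdd
  have hA0 : ∀ i, 0 ≤ A i := fun i => (norm_nonneg _).trans (hA i _ (hmem 0))
  have hB0 : ∀ i, 0 ≤ B i := fun i => (norm_nonneg _).trans (hB i 0)
  set SA := ∑ i ∈ Finset.range (n + 1), A i
  set SB := 1 + ∑ i ∈ Finset.range (n + 1), B i
  have hSB : 1 ≤ SB := by
    have : 0 ≤ ∑ i ∈ Finset.range (n + 1), B i := Finset.sum_nonneg fun i _ => hB0 i
    simp only [SB]; linarith
  refine ⟨n.factorial * SA * SB ^ n, fun q => ?_⟩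
  refine norm_iteratedFDeriv_comp_le' (g := fun x : ℝ => x ^ s) (f := f) (t := t)
    (by rintro _ ⟨q, rfl⟩; exact hmem q) hu hg hf.smooth (by exact_mod_cast le_top) q ?_ ?_
  · intro i hi
    exact (hA i _ (hmem q)).trans (Finset.single_le_sum (f := A) (fun j _ => hA0 j)
      (Finset.mem_range.2 (by omega)))
  · intro i hi1 hi
    have h1 : B i ≤ SB := by
      have := Finset.single_le_sum (f := B) (fun j _ => hB0 j)
        (Finset.mem_range.2 (by omega : i < n + 1))
      simp only [SB]; linarith
    exact (hB i q).trans (h1.trans (le_self_pow₀ hSB (by omega)))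

end Nice

/-! ### Rules for directional derivatives -/

lemma Dr_add {f g : Q d → ℝ} (hf : Nice f) (hg : Nice g) (e q : Q d) :
    Dr e (fun q => f q + g q) q = Dr e f q + Dr e g q := by
  simp only [Dr]; rw [fderiv_fun_add (hf.diff q) (hg.diff q)]; rfl

lemma Dr_mul {f g : Q d → ℝ} (hf : Nice f) (hg : Nice g) (e q : Q d) :
    Dr e (fun q => f q * g q) q = Dr e f q * g q + f q * Dr e g q := by
  simp only [Dr]; rw [fderiv_fun_mul (hf.diff q) (hg.diff q)]
  simp; ring

lemma Dr_const (c : ℝ) (e q : Q d) : Dr e (fun _ => c) q = 0 := by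
  simp [Dr]

lemma Dr_rpow {f : Q d → ℝ} (hf : Nice f) {c : ℝ} (hc : 0 < c) (hfc : ∀ q, c ≤ f q) (s : ℝ)
    (e q : Q d) : Dr e (fun q => f q ^ s) q = s * f q ^ (s - 1) * Dr e f q := by
  have := ((hf.diff q).hasFDerivAt.rpow_const (p := s) (Or.inl (hc.trans_le (hfc q)).ne')).fderiv
  simp only [Dr]; rw [this]; simp

lemma Dr_add_dir (e e' : Q d) (f : Q d → ℝ) (q : Q d) : Dr (e + e') f q = Dr e f q + Dr e' f q := by
  simp [Dr]

lemma Dr_comm {f : Q d → ℝ} (hf : Nice f) (e e' q : Q d) : Dr e (Dr e' f) q = Dr e' (Dr e f) q := by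
  have hs : ContDiff ℝ (⊤ : ℕ∞) (fderiv ℝ f) := hf.smooth.fderiv_right (by simp)
  have h2 : ∀ a b : Q d, Dr a (Dr b f) q = fderiv ℝ (fderiv ℝ f) q a b := by
    intro a b
    have := fderiv_clm_apply (hs.differentiable (by simp) q) (differentiableAt_const (x := q) b)
    change fderiv ℝ (fun y => fderiv ℝ f y b) q a = _
    rw [this]; simp
  rw [h2, h2]
  have h3 : ContDiff ℝ 2 f := contDiff_infty.1 hf.smooth 2
  exact (h3.contDiffAt.isSymmSndFDerivAt (by simp)).eq _ _

/-! ### The kinetic Fokker–Planck operator -/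

/-- The time direction. -/
def eT (d : ℕ) : Q d := (1, 0, 0)

/-- The `i`-th position direction. -/
def eX (i : Fin d) : Q d := (0, Pi.single i 1, 0)

/-- The `i`-th velocity direction. -/
def eV (i : Fin d) : Q d := (0, 0, Pi.single i 1)

/-- The kinetic Fokker–Planck operator `∂_t + v·∇_x + v·∇_v - Δ_v`, so that the equation reads
`LL h = 0`. -/
def LL (f : Q d → ℝ) (q : Q d) : ℝ :=
  Dr (eT d) f q + ∑ i, q.2.2 i * Dr (eX i) f q + ∑ i, q.2.2 i * Dr (eV i) f q
    - ∑ i, Dr (eV i) (Dr (eV i) f) q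

lemma Dr_line {f : Q d → ℝ} (hf : Nice f) (q e : Q d) (s : ℝ) :
    HasDerivAt (fun s : ℝ => f (q + s • e)) (Dr e f (q + s • e)) s := by
  have h1 : HasDerivAt (fun s : ℝ => q + s • e) e s := by
    simpa using ((hasDerivAt_id s).smul_const e).const_add q
  exact (hf.diff (q + s • e)).hasFDerivAt.comp_hasDerivAt s h1

lemma DrDr_add {f g : Q d → ℝ} (hf : Nice f) (hg : Nice g) (e q : Q d) :
    Dr e (Dr e (fun q => f q + g q)) q = Dr e (Dr e f) q + Dr e (Dr e g) q := by
  have : Dr e (fun q => f q + g q) = fun q => Dr e f q + Dr e g q := funext (Dr_add hf hg e)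
  rw [this, Dr_add (hf.dr e) (hg.dr e)]

lemma DrDr_mul {f g : Q d → ℝ} (hf : Nice f) (hg : Nice g) (e q : Q d) :
    Dr e (Dr e (fun q => f q * g q)) q
      = Dr e (Dr e f) q * g q + 2 * (Dr e f q * Dr e g q) + f q * Dr e (Dr e g) q := by
  have : Dr e (fun q => f q * g q) = fun q => Dr e f q * g q + f q * Dr e g q :=
    funext (Dr_mul hf hg e)
  rw [this, Dr_add ((hf.dr e).mul hg) (hf.mul (hg.dr e)), Dr_mul (hf.dr e) hg,
    Dr_mul hf (hg.dr e)]
  ring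

lemma DrDr_rpow {f : Q d → ℝ} (hf : Nice f) {c : ℝ} (hc : 0 < c) (hfc : ∀ q, c ≤ f q) (s : ℝ)
    (e q : Q d) : Dr e (Dr e (fun q => f q ^ s)) q
      = s * f q ^ (s - 1) * Dr e (Dr e f) q + s * (s - 1) * f q ^ (s - 2) * Dr e f q ^ 2 := by
  have : Dr e (fun q => f q ^ s) = fun q => s * (f q ^ (s - 1) * Dr e f q) :=
    funext fun q => by rw [Dr_rpow hf hc hfc, mul_assoc]
  rw [this, Dr_mul (Nice.const s) ((hf.rpow hc hfc _).mul (hf.dr e)), Dr_const,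
    Dr_mul (hf.rpow hc hfc _) (hf.dr e), Dr_rpow hf hc hfc]
  rw [show s - 1 - 1 = s - 2 by ring]; ring

lemma LL_add {f g : Q d → ℝ} (hf : Nice f) (hg : Nice g) (q : Q d) :
    LL (fun q => f q + g q) q = LL f q + LL g q := by
  simp only [LL, Dr_add hf hg, DrDr_add hf hg, mul_add, Finset.sum_add_distrib]; ring

/-- Leibniz rule; the second-order part produces the carré du champ `-2 ∇_v f · ∇_v g`. -/
lemma LL_mul {f g : Q d → ℝ} (hf : Nice f) (hg : Nice g) (q : Q d) :
    LL (fun q => f q * g q) q = LL f q * g q + f q * LL g q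
      - 2 * ∑ i, Dr (eV i) f q * Dr (eV i) g q := by
  have h1 : ∀ e : Fin d → Q d, ∑ i, q.2.2 i * (Dr (e i) f q * g q + f q * Dr (e i) g q)
      = (∑ i, q.2.2 i * Dr (e i) f q) * g q + f q * ∑ i, q.2.2 i * Dr (e i) g q := by
    intro e
    rw [Finset.sum_mul, Finset.mul_sum, ← Finset.sum_add_distrib]
    exact Finset.sum_congr rfl fun i _ => by ring
  simp only [LL, Dr_mul hf hg, DrDr_mul hf hg, h1, Finset.sum_add_distrib, ← Finset.mul_sum,
    ← Finset.sum_mul]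
  ring

lemma LL_const (c : ℝ) (q : Q d) : LL (fun _ => c) q = 0 := by
  have : ∀ e : Q d, Dr e (fun _ : Q d => c) = fun _ => 0 := fun e => funext (Dr_const c e)
  simp [LL, this, Dr_const]

lemma LL_const_mul (c : ℝ) {f : Q d → ℝ} (hf : Nice f) (q : Q d) :
    LL (fun q => c * f q) q = c * LL f q := by
  rw [LL_mul (Nice.const c) hf, LL_const]; simp [Dr_const]

lemma LL_sum {ι : Type*} (s : Finset ι) {f : ι → Q d → ℝ} (hf : ∀ i, Nice (f i)) (q : Q d) :
    LL (fun q => ∑ i ∈ s, f i q) q = ∑ i ∈ s, LL (f i) q := by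
  classical
  induction s using Finset.induction_on with
  | empty => simpa using LL_const (d := d) 0 q
  | insert a s ha ih =>
    simp only [Finset.sum_insert ha]
    rw [LL_add (hf a) (Nice.sum s hf), ih]

lemma LL_rpow {f : Q d → ℝ} (hf : Nice f) {c : ℝ} (hc : 0 < c) (hfc : ∀ q, c ≤ f q) (s : ℝ)
    (q : Q d) : LL (fun q => f q ^ s) q
      = s * f q ^ (s - 1) * LL f q - s * (s - 1) * f q ^ (s - 2) * ∑ i, Dr (eV i) f q ^ 2 := by
  have h1 : ∀ e : Fin d → Q d, ∑ i, q.2.2 i * (s * f q ^ (s - 1) * Dr (e i) f q)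
      = s * f q ^ (s - 1) * ∑ i, q.2.2 i * Dr (e i) f q := by
    intro e
    rw [Finset.mul_sum]
    exact Finset.sum_congr rfl fun i _ => by ring
  simp only [LL, Dr_rpow hf hc hfc, DrDr_rpow hf hc hfc, h1, Finset.sum_add_distrib,
    ← Finset.mul_sum]
  ring

/-- Commutators: differentiating `LL f = 0` in a phase-space direction `e` leaves only the derivatives
of the coefficients `v_i` of the first-order terms. -/
lemma LL_Dr {f : Q d → ℝ} (hf : Nice f) (hL : ∀ q : Q d, 0 ≤ q.1 → LL f q = 0) (e q : Q d)
    (he : e.1 = 0) (hq : 0 ≤ q.1) :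
    LL (Dr e f) q = - ∑ i, e.2.2 i * (Dr (eX i) f q + Dr (eV i) f q) := by
  have hv : ∀ i, HasDerivAt (fun s : ℝ => (q + s • e).2.2 i) (e.2.2 i) 0 := by
    intro i
    simpa using ((hasDerivAt_id (0:ℝ)).mul_const (e.2.2 i)).const_add (q.2.2 i)
  have hl : ∀ {g : Q d → ℝ}, Nice g → HasDerivAt (fun s : ℝ => g (q + s • e)) (Dr e g q) 0 := by
    intro g hg; simpa using Dr_line hg q e 0
  have h0 := (((hl (hf.dr (eT d))).add (HasDerivAt.fun_sum (u := Finset.univ) fun i _ =>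
    (hv i).mul (hl (hf.dr (eX i))))).add (HasDerivAt.fun_sum (u := Finset.univ) fun i _ =>
    (hv i).mul (hl (hf.dr (eV i))))).sub (HasDerivAt.fun_sum (u := Finset.univ) fun i _ =>
    hl ((hf.dr (eV i)).dr (eV i)))
  have h1 : HasDerivAt (fun _ : ℝ => (0:ℝ)) 0 0 := hasDerivAt_const _ _
  have heq := h0.unique (h1.congr_of_eventuallyEq (Eventually.of_forall fun s => by
    have := hL (q + s • e) (by simpa [he] using hq)
    simpa [LL] using this))
  have hc : ∀ i, Dr (eV i) (Dr (eV i) (Dr e f)) q = Dr e (Dr (eV i) (Dr (eV i) f)) q := by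
    intro i
    rw [Dr_comm (hf.dr (eV i)) e (eV i), funext (Dr_comm hf (eV i) e)]
  simp only [LL, hc, Dr_comm hf _ e]
  simp only [zero_smul, add_zero, mul_add, Finset.sum_add_distrib] at heq ⊢
  linarith

/-- The map `(y, z) ↦ y^{p-2} z²` is jointly convex on `y > 0` for `p ∈ (1,2]`, so the second-order
terms have a sign. The Hessian is the quadratic form of `key`; after completing the square
`2 (h ∂z + α z ∂h)²`, the remaining coefficient `-α (α + 1)`, with `α = p - 2`, is nonnegative
exactly because `-1 < α ≤ 0`. -/
lemma LL_quad_le {h z : Q d → ℝ} (hh : Nice h) (hz : Nice z) {c : ℝ} (hc : 0 < c)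
    (hhc : ∀ q, c ≤ h q) {p : ℝ} (hp1 : 1 < p) (hp2 : p ≤ 2) (q : Q d) (hL : LL h q = 0) :
    LL (fun q => h q ^ (p - 2) * (z q * z q)) q ≤ 2 * h q ^ (p - 2) * z q * LL z q := by
  have hpos : 0 < h q := hc.trans_le (hhc q)
  rw [LL_mul (hh.rpow hc hhc _) (hz.mul hz), LL_mul hz hz, LL_rpow hh hc hhc, hL]
  simp only [Dr_mul hz hz, Dr_rpow hh hc hhc]
  set α := p - 2 with hα
  have e1 : h q ^ (α - 1) = h q ^ (α - 2) * h q := by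
    rw [← Real.rpow_add_one hpos.ne']; congr 1; ring
  have e2 : h q ^ α = h q ^ (α - 2) * h q ^ 2 := by
    rw [← Real.rpow_natCast (h q) 2, ← Real.rpow_add hpos]; congr 1; push_cast; ring
  have hw : 0 < h q ^ (α - 2) := Real.rpow_pos_of_pos hpos _
  rw [e1, e2]
  set w := h q ^ (α - 2)
  have key : 0 ≤ ∑ i, w * (α * (α - 1) * (z q * Dr (eV i) h q) ^ 2
      + 4 * α * (h q * Dr (eV i) z q) * (z q * Dr (eV i) h q) + 2 * (h q * Dr (eV i) z q) ^ 2) := by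
    refine Finset.sum_nonneg fun i _ => mul_nonneg hw.le ?_
    have h1 : 0 ≤ -α := by linarith
    have h2 : 0 ≤ α + 1 := by linarith
    nlinarith [sq_nonneg (h q * Dr (eV i) z q + α * (z q * Dr (eV i) h q)),
      mul_nonneg (mul_nonneg h1 h2) (sq_nonneg (z q * Dr (eV i) h q))]
  have expand : ∑ i, w * (α * (α - 1) * (z q * Dr (eV i) h q) ^ 2
      + 4 * α * (h q * Dr (eV i) z q) * (z q * Dr (eV i) h q) + 2 * (h q * Dr (eV i) z q) ^ 2)
      = α * (α - 1) * w * (∑ i, Dr (eV i) h q ^ 2) * (z q * z q)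
        + 2 * (∑ i, α * (w * h q) * Dr (eV i) h q * (Dr (eV i) z q * z q + z q * Dr (eV i) z q))
        + w * h q ^ 2 * (2 * ∑ i, Dr (eV i) z q * Dr (eV i) z q) := by
    simp only [Finset.mul_sum, Finset.sum_mul, ← Finset.sum_add_distrib]
    exact Finset.sum_congr rfl fun i _ => by ring
  rw [expand] at key
  linarith

/-! ### Invariance of the measure and Gronwall -/

lemma Nice.integrable {f : Q d → ℝ} (hf : Nice f) {α : Type*} [TopologicalSpace α]
    [MeasurableSpace α] [OpensMeasurableSpace α] [SecondCountableTopology α] (ν : Measure α) [IsFiniteMeasure ν]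
    {ι : α → Q d} (hι : Continuous ι) : Integrable (fun a => f (ι a)) ν := by
  obtain ⟨C, hC⟩ := hf.bounded
  exact Integrable.of_bound (hf.continuous.comp hι).aestronglyMeasurable C
    (ae_of_all _ fun a => hC _)

lemma integrable_coord (i : Fin d) : Integrable (fun v : V d => v i) (gm d) :=
  (ContinuousLinearMap.proj (R := ℝ) (φ := fun _ : Fin d => ℝ) i).integrable_comp
      ProbabilityTheory.IsGaussian.integrable_id

lemma Nice.integrable_coord_mul_gm {f : Q d → ℝ} (hf : Nice f) (t : ℝ) (x : V d) (i : Fin d) :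
    Integrable (fun v => v i * f (t, x, v)) (gm d) := by
  obtain ⟨C, hC⟩ := hf.bounded
  exact (integrable_coord i).mul_bdd (c := C)
    (hf.continuous.comp (by fun_prop : Continuous fun v : V d => ((t, x, v) : Q d))).aestronglyMeasurable
    (ae_of_all _ fun a => hC _)

lemma Nice.integrable_coord_mul {f : Q d → ℝ} (hf : Nice f) (t : ℝ) (i : Fin d) :
    Integrable (fun z : V d × V d => z.2 i * f (t, z)) (mu d) := by
  obtain ⟨C, hC⟩ := hf.bounded
  have : Integrable (fun z : V d × V d => z.2 i) (mu d) := (integrable_coord i).comp_snd (km d)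
  exact this.mul_bdd (c := C)
    (hf.continuous.comp (by fun_prop : Continuous fun z : V d × V d => ((t, z) : Q d))).aestronglyMeasurable
    (ae_of_all _ fun a => hC _)

lemma hasDerivAt_integral_line {f : Q d → ℝ} (hf : Nice f) {α : Type*} [TopologicalSpace α]
    [MeasurableSpace α] [OpensMeasurableSpace α] [SecondCountableTopology α] (ν : Measure α) [IsFiniteMeasure ν]
    {ι : α → Q d} (hι : Continuous ι) (e : Q d) (s : ℝ) :
    HasDerivAt (fun s : ℝ => ∫ a, f (ι a + s • e) ∂ν) (∫ a, Dr e f (ι a + s • e) ∂ν) s := by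
  obtain ⟨C, hC⟩ := (hf.dr e).bounded
  have hι' : ∀ r : ℝ, Continuous fun a => ι a + r • e := fun r => hι.add continuous_const
  refine (hasDerivAt_integral_of_dominated_loc_of_deriv_le (x₀ := s)
    (F := fun r a => f (ι a + r • e)) (bound := fun _ => C)
    (F' := fun s a => Dr e f (ι a + s • e)) univ_mem (Eventually.of_forall fun r =>
      (hf.continuous.comp (hι' r)).aestronglyMeasurable)
    (hf.integrable ν (hι' s))
    ((hf.dr e).continuous.comp (hι' s)).aestronglyMeasurable
    (ae_of_all _ fun a r _ => hC _) (integrable_const C)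
    (ae_of_all _ fun a r _ => Dr_line hf (ι a) e r)).2

/-- The integral over the torus does not change under translations in `x`; the derivative of this
constant function of the translation parameter is the left-hand side. -/
lemma integral_Dr_eX {f : Q d → ℝ} (hf : Nice f) (t : ℝ) (v : V d) (i : Fin d) :
    ∫ x, Dr (eX i) f (t, x, v) ∂km d = 0 := by
  have h1 := hasDerivAt_integral_line hf (km d)
    (by fun_prop : Continuous fun x : V d => ((t, x, v) : Q d)) (eX i) 0
  have h2 : (fun s : ℝ => ∫ x, f ((t, x, v) + s • eX i) ∂km d)
      = fun _ => ∫ x, f (t, x, v) ∂km d := by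
    funext s
    have := km_shift d (fun x => f (t, x, v)) (fun x k => by simpa using hf.per (t, x, v) k)
      (s • Pi.single i 1)
    simpa [eX] using this
  rw [h2] at h1
  simpa using h1.unique (hasDerivAt_const _ _)

lemma integral_transport {f : Q d → ℝ} (hf : Nice f) (t : ℝ) (i : Fin d) :
    ∫ z, z.2 i * Dr (eX i) f (t, z) ∂mu d = 0 := by
  have := (hf.dr (eX i)).integrable_coord_mul t i
  rw [mu] at this ⊢
  rw [integral_prod_symm _ this]
  simp [integral_const_mul, integral_Dr_eX hf]

lemma fderiv_gauss (v : V d) (i : Fin d) :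
    fderiv ℝ (gauss d) v (Pi.single i 1) = - v i * gauss d v := by
  have h1 : HasFDerivAt (fun v : V d => -(∑ i, v i ^ 2) / 2)
      (-(∑ j, v j • (ContinuousLinearMap.proj j : V d →L[ℝ] ℝ))) v := by
    have h2 : HasFDerivAt (fun v : V d => ∑ j, v j ^ 2)
      (∑ j, (2 * v j ^ 1) • (ContinuousLinearMap.proj j : V d →L[ℝ] ℝ)) v :=
      HasFDerivAt.fun_sum fun j _ => by
        simpa using (hasFDerivAt_apply (𝕜 := ℝ) j v).pow 2
    have h3 := (h2.neg).mul_const (1/2 : ℝ)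
    refine (h3.congr_fderiv ?_).congr_of_eventuallyEq (Eventually.of_forall fun w => by simp; ring)
    ext w
    simp [Finset.mul_sum, mul_assoc]

  have h4 := (h1.exp.const_mul ((2 * π) ^ (-(d : ℝ) / 2))).fderiv
  have : gauss d = fun v => (2 * π) ^ (-(d : ℝ) / 2) * rexp (-(∑ i, v i ^ 2) / 2) := rfl
  rw [this, h4]
  simp [Pi.single_apply]
  ring

/-- Gaussian integration by parts. -/
lemma integral_Dr_eV {f : Q d → ℝ} (hf : Nice f) (t : ℝ) (x : V d) (i : Fin d) :
    ∫ v, Dr (eV i) f (t, x, v) ∂gm d = ∫ v, v i * f (t, x, v) ∂gm d := by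
  have hι : Continuous fun v : V d => ((t, x, v) : Q d) := by fun_prop
  have hd : ∀ v, HasFDerivAt (fun v : V d => f (t, x, v))
      ((fderiv ℝ f (t, x, v)).comp ((ContinuousLinearMap.inr ℝ ℝ (V d × V d)).comp
        (ContinuousLinearMap.inr ℝ (V d) (V d)))) v := by
    intro v
    have : HasFDerivAt (fun v : V d => ((t, x, v) : Q d)) ((ContinuousLinearMap.inr ℝ ℝ (V d × V d)).comp
        (ContinuousLinearMap.inr ℝ (V d) (V d))) v :=
      ((hasFDerivAt_const t v).prodMk ((hasFDerivAt_const x v).prodMk (hasFDerivAt_id v))).congr_fderiv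
        (by ext <;> simp)
    exact (hf.diff (t, x, v)).hasFDerivAt.comp v this
  have hd' : ∀ v, fderiv ℝ (fun v : V d => f (t, x, v)) v (Pi.single i 1)
      = Dr (eV i) f (t, x, v) := by
    intro v; rw [(hd v).fderiv]; rfl
  rw [integral_gm, integral_gm]
  have := integral_mul_fderiv_eq_neg_fderiv_mul_of_integrable (μ := (volume : Measure (V d)))
    (f := fun v => f (t, x, v)) (g := gauss d) (v := Pi.single i 1) ?_ ?_ ?_
    (fun v _ => (hd v).differentiableAt)
    (fun v _ => (gauss_contDiff d).differentiable (by simp) v)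
  · simp only [hd', fderiv_gauss] at this
    rw [← neg_eq_iff_eq_neg] at this
    rw [← this, ← integral_neg]
    exact integral_congr_ae (ae_of_all _ fun v => by simp only; ring)
  · simp only [hd']
    exact integrable_gm d ((hf.dr (eV i)).integrable (gm d) hι)
  · simp only [fderiv_gauss]
    refine (integrable_gm d (hf.integrable_coord_mul_gm t x i)).neg.congr
      (ae_of_all _ fun v => ?_)
    simp only [Pi.neg_apply]; ring
  · exact integrable_gm d (hf.integrable (gm d) hι)

lemma integral_OU {f : Q d → ℝ} (hf : Nice f) (t : ℝ) (i : Fin d) :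
    ∫ z, Dr (eV i) f (t, z) ∂mu d = ∫ z, z.2 i * f (t, z) ∂mu d := by
  have h1 := hf.integrable_coord_mul t i
  have h2 := (hf.dr (eV i)).integrable (mu d)
    (by fun_prop : Continuous fun z : V d × V d => ((t, z) : Q d))
  rw [mu] at h1 h2 ⊢
  rw [integral_prod _ h1, integral_prod _ h2]
  simp only [integral_Dr_eV hf]

/-- The integral of a time-dependent function against `μ` at time `t`. -/
def J (f : Q d → ℝ) (t : ℝ) : ℝ := ∫ z, f (t, z) ∂mu d

lemma Nice.integrable_mu {f : Q d → ℝ} (hf : Nice f) (t : ℝ) :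
    Integrable (fun z : V d × V d => f (t, z)) (mu d) :=
  hf.integrable (mu d) (by fun_prop)

lemma integrable_LL {f : Q d → ℝ} (hf : Nice f) (t : ℝ) :
    Integrable (fun z : V d × V d => LL f (t, z)) (mu d) :=
  ((((hf.dr _).integrable_mu t).add (integrable_finsetSum _ fun i _ =>
      (hf.dr (eX i)).integrable_coord_mul t i)).add (integrable_finsetSum _ fun i _ =>
      (hf.dr (eV i)).integrable_coord_mul t i)).sub (integrable_finsetSum _ fun i _ =>
      ((hf.dr (eV i)).dr (eV i)).integrable_mu t)

/-- The measure `μ` is invariant: transport and Ornstein–Uhlenbeck terms integrate to zero. -/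
lemma integral_LL {f : Q d → ℝ} (hf : Nice f) (t : ℝ) :
    ∫ z, LL f (t, z) ∂mu d = ∫ z, Dr (eT d) f (t, z) ∂mu d := by
  have i1 := (hf.dr (eT d)).integrable_mu t
  have i2 := fun i => (hf.dr (eX i)).integrable_coord_mul t i
  have i3 := fun i => (hf.dr (eV i)).integrable_coord_mul t i
  have i4 := fun i => ((hf.dr (eV i)).dr (eV i)).integrable_mu t
  have j2 := integrable_finsetSum Finset.univ fun i _ => i2 i
  have j3 := integrable_finsetSum Finset.univ fun i _ => i3 i
  have j4 := integrable_finsetSum Finset.univ fun i _ => i4 i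
  simp only [LL]
  rw [integral_sub (by exact (i1.add j2).add j3) j4, integral_add (by exact i1.add j2) j3,
    integral_add i1 j2,
    integral_finsetSum _ fun i _ => i2 i, integral_finsetSum _ fun i _ => i3 i,
    integral_finsetSum _ fun i _ => i4 i]
  simp only [integral_transport hf, integral_OU (hf.dr _)]
  simp

lemma hasDerivAt_J {f : Q d → ℝ} (hf : Nice f) (t : ℝ) :
    HasDerivAt (J f) (∫ z, LL f (t, z) ∂mu d) t := by
  rw [integral_LL hf]
  have := hasDerivAt_integral_line hf (mu d)
    (by fun_prop : Continuous fun z : V d × V d => ((0, z) : Q d)) (eT d) t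
  have h0 : ∀ (s : ℝ) (z : V d × V d), ((0, z) : Q d) + s • eT d = (s, z) := fun s z => by
    ext <;> simp [eT]
  simp only [h0] at this
  exact this

/-- Gronwall's inequality on `[0, ∞)`, with no sign assumption on `F` or `a`. -/
lemma gronwall_exp {F F' : ℝ → ℝ} {a : ℝ} (hF : ∀ t, 0 ≤ t → HasDerivAt F (F' t) t)
    (hle : ∀ t, 0 ≤ t → F' t ≤ a * F t) (t : ℝ) (ht : 0 ≤ t) : F t ≤ rexp (a * t) * F 0 := by
  have hd : ∀ t, 0 ≤ t → HasDerivAt (fun t => rexp (-a * t) * F t)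
      (rexp (-a * t) * (F' t - a * F t)) t := by
    intro t ht
    have h1 : HasDerivAt (fun t => rexp (-a * t)) (rexp (-a * t) * (-a)) t := by
      simpa using ((hasDerivAt_id t).const_mul (-a)).exp
    exact (h1.mul (hF t ht)).congr_deriv (by ring)
  have hanti : AntitoneOn (fun t => rexp (-a * t) * F t) (Set.Ici 0) := by
    refine antitoneOn_of_deriv_nonpos (convex_Ici 0)
      (fun t ht => (hd t ht).continuousAt.continuousWithinAt)
      (fun t ht => (hd t (interior_subset ht)).differentiableAt.differentiableWithinAt) ?_
    intro t ht
    have ht := interior_subset ht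
    rw [(hd t ht).deriv]
    exact mul_nonpos_of_nonneg_of_nonpos (exp_pos _).le (sub_nonpos.2 (hle t ht))
  have h := hanti (Set.mem_Ici.2 le_rfl) (Set.mem_Ici.2 ht) ht
  simp only [mul_zero, exp_zero, one_mul] at h
  calc F t = rexp (a * t) * (rexp (-a * t) * F t) := by
        rw [← mul_assoc, ← exp_add]; simp
    _ ≤ _ := mul_le_mul_of_nonneg_left h (exp_pos _).le

/-! ### Poincaré inequality -/

/-- The law of `((x, z), (v, w))` with `x, z` uniform on the torus and `v, w` Gaussian, all
independent. -/
def Om (d : ℕ) : Measure ((V d × V d) × (V d × V d)) :=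
  ((km d).prod (km d)).prod ((gm d).prod (gm d))

instance Om_prob (d : ℕ) : IsProbabilityMeasure (Om d) := by unfold Om; infer_instance

/-- The interpolation path `s ↦ (x + sin s z, cos s v + sin s w)` at time `t`. It leads from `(x, v)`
at `s = 0` to the independent copy `(x + z, w)` at `s = π/2`. -/
def pth (t s : ℝ) (a : (V d × V d) × (V d × V d)) : Q d :=
  (t, a.1.1 + sin s • a.1.2, (ContinuousLinearMap.rotation s a.2).1)

/-- The velocity of the path `pth`. -/
def vel (s : ℝ) (a : (V d × V d) × (V d × V d)) : Q d :=
  (0, cos s • a.1.2, (ContinuousLinearMap.rotation s a.2).2)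

/-- The squared phase-space gradient `|∇_{x,v} f|²`. -/
def SS (f : Q d → ℝ) (q : Q d) : ℝ :=
  ∑ i, (Dr (eX i) f q * Dr (eX i) f q + Dr (eV i) f q * Dr (eV i) f q)

/-- The squared Euclidean norm of `(z, w)`. -/
def NN (z w : V d) : ℝ := ∑ i, (z i ^ 2 + w i ^ 2)

lemma NN_nonneg (z w : V d) : 0 ≤ NN z w := Finset.sum_nonneg fun i _ => by positivity

lemma nice_SS {f : Q d → ℝ} (hf : Nice f) : Nice (SS f) :=
  Nice.sum _ fun _ => ((hf.dr _).mul (hf.dr _)).add ((hf.dr _).mul (hf.dr _))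

lemma SS_nonneg (f : Q d → ℝ) (q : Q d) : 0 ≤ SS f q :=
  Finset.sum_nonneg fun _ _ => add_nonneg (mul_self_nonneg _) (mul_self_nonneg _)

lemma fderiv_sq_le (f : Q d → ℝ) (q : Q d) (z w : V d) :
    (fderiv ℝ f q (0, z, w)) ^ 2 ≤ SS f q * NN z w := by
  have h1 : ((0, z, w) : Q d) = ∑ i, (z i • eX i + w i • eV i) := by
    have hz : z = ∑ i, z i • (Pi.single i 1 : V d) := by
      ext j; simp [Finset.sum_apply, Pi.single_apply]
    have hw : w = ∑ i, w i • (Pi.single i 1 : V d) := by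
      ext j; simp [Finset.sum_apply, Pi.single_apply]
    refine Prod.ext ?_ (Prod.ext ?_ ?_)
    · simp [eX, eV, Prod.fst_sum]
    · simpa [eX, eV, Prod.fst_sum, Prod.snd_sum] using hz
    · simpa [eX, eV, Prod.fst_sum, Prod.snd_sum] using hw
  rw [h1, map_sum]
  simp only [map_add, map_smul, smul_eq_mul, Finset.sum_add_distrib]
  have hX := Finset.sum_mul_sq_le_sq_mul_sq (Finset.univ ×ˢ Finset.univ : Finset (Fin d × Fin 2))
    (fun j => if j.2 = 0 then z j.1 else w j.1)
    (fun j => if j.2 = 0 then Dr (eX j.1) f q else Dr (eV j.1) f q)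
  simp only [Finset.sum_product, Fin.sum_univ_two, Fin.isValue, if_true, one_ne_zero, if_false,
    Finset.sum_add_distrib] at hX
  refine hX.trans (le_of_eq ?_)
  simp only [SS, NN, Finset.sum_add_distrib, ← pow_two]
  ring

lemma integrable_sq_km (i : Fin d) : Integrable (fun z : V d => z i ^ 2) (km d) :=
  ((by fun_prop : Continuous fun z : V d => z i ^ 2).continuousOn).integrableOn_compact isCompact_Icc

lemma integrable_norm_km : Integrable (fun z : V d => ‖z‖) (km d) :=
  (continuous_norm.continuousOn).integrableOn_compact isCompact_Icc

lemma integrable_norm_gm : Integrable (fun z : V d => ‖z‖) (gm d) :=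
  (ProbabilityTheory.IsGaussian.integrable_id (μ := gm d)).norm

lemma memLp_coord (i : Fin d) : MemLp (fun v : V d => v i) 2 (gm d) := by
  have := ProbabilityTheory.IsGaussian.memLp_dual (gm d)
    (ContinuousLinearMap.proj (R := ℝ) (φ := fun _ : Fin d => ℝ) i) 2 (by simp)
  exact this

lemma integrable_sq_gm (i : Fin d) : Integrable (fun v : V d => v i ^ 2) (gm d) :=
  (memLp_coord i).integrable_sq

lemma integrable_NN : Integrable (fun p : V d × V d => NN p.1 p.2) (mu d) :=
  integrable_finsetSum _ fun i _ =>
    ((integrable_sq_km i).comp_fst (gm d)).add ((integrable_sq_gm i).comp_snd (km d))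

lemma continuous_rot (s : ℝ) : Continuous (ContinuousLinearMap.rotation s : V d × V d →L[ℝ] V d × V d) :=
  ContinuousLinearMap.continuous _

lemma continuous_pth (t s : ℝ) : Continuous (pth (d := d) t s) := by
  have := continuous_rot (d := d) s
  unfold pth; fun_prop

lemma continuous_vel (s : ℝ) : Continuous (vel (d := d) s) := by
  have := continuous_rot (d := d) s
  unfold vel; fun_prop

lemma integrable_NN_rot (s : ℝ) :
    Integrable (fun a : (V d × V d) × (V d × V d) =>
      NN a.1.2 (ContinuousLinearMap.rotation s a.2).2) (Om d) := by
  refine integrable_finsetSum _ fun i _ => Integrable.add ?_ ?_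
  · exact ((integrable_sq_km i).comp_snd (km d)).comp_fst _
  · have h1 : Integrable (fun p : V d × V d => 2 * p.1 i ^ 2 + 2 * p.2 i ^ 2) ((gm d).prod (gm d)) :=
      (((integrable_sq_gm i).comp_fst (gm d)).const_mul 2).add
        (((integrable_sq_gm i).comp_snd (gm d)).const_mul 2)
    have h2 : Integrable (fun a : (V d × V d) × (V d × V d) => 2 * a.2.1 i ^ 2 + 2 * a.2.2 i ^ 2)
      (Om d) := h1.comp_snd _
    have hc := continuous_rot (d := d) s
    refine h2.mono' (by fun_prop : Continuous fun a : (V d × V d) × (V d × V d) =>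
      (ContinuousLinearMap.rotation s a.2).2 i ^ 2).aestronglyMeasurable (ae_of_all _ fun a => ?_)
    rw [Real.norm_of_nonneg (sq_nonneg _), ContinuousLinearMap.rotation_apply]
    simp only [Pi.add_apply, Pi.smul_apply, smul_eq_mul]
    nlinarith [sq_nonneg (cos s * a.2.1 i + sin s * a.2.2 i), Real.sin_sq_add_cos_sq s,
      sq_nonneg (a.2.1 i), sq_nonneg (a.2.2 i),
      show (-sin s * a.2.1 i + cos s * a.2.2 i) ^ 2 + (cos s * a.2.1 i + sin s * a.2.2 i) ^ 2
        = (sin s ^ 2 + cos s ^ 2) * (a.2.1 i ^ 2 + a.2.2 i ^ 2) by ring]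

lemma integrable_bdd_mul_NN {g : Q d → ℝ} (hg : Nice g) (t s : ℝ) :
    Integrable (fun a => g (pth t s a) * NN a.1.2 (ContinuousLinearMap.rotation s a.2).2) (Om d) := by
  obtain ⟨C, hC⟩ := hg.bounded
  exact (integrable_NN_rot s).bdd_mul (c := C)
    (hg.continuous.comp (continuous_pth t s)).aestronglyMeasurable (ae_of_all _ fun a => hC _)

lemma J_eq {g : Q d → ℝ} (hg : Nice g) (t : ℝ) :
    J g t = ∫ x, (∫ v, g (t, x, v) ∂gm d) ∂km d := by
  have := hg.integrable_mu t
  rw [mu] at this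
  rw [J, mu, integral_prod _ this]

lemma slice_per {g : Q d → ℝ} (hg : Nice g) (t : ℝ) (x : V d) (k : Fin d → ℤ) :
    ∫ v, g (t, x + (fun i => (k i : ℝ)), v) ∂gm d = ∫ v, g (t, x, v) ∂gm d := by
  congr 1; ext v; simpa using hg.per (t, x, v) k

/-- At each `s` the position on the path has law `μ` and is independent of `(z, w_s)`, where `w_s` is
the rotated Gaussian velocity: rotation invariance in `v`, translation invariance in `x`. -/
lemma integral_invariant {g : Q d → ℝ} (hg : Nice g) (t s : ℝ) :
    ∫ a, g (pth t s a) * NN a.1.2 (ContinuousLinearMap.rotation s a.2).2 ∂Om d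
      = J g t * ∫ p, NN p.1 p.2 ∂mu d := by
  have hI := integrable_bdd_mul_NN hg t s
  have hinner : ∀ p : V d × V d,
      ∫ y, g (pth t s (p, y)) * NN p.2 (ContinuousLinearMap.rotation s y).2 ∂(gm d).prod (gm d)
        = (∫ v, g (t, p.1 + sin s • p.2, v) ∂gm d) * ∫ w, NN p.2 w ∂gm d := by
    intro p
    rw [← integral_prod_mul (f := fun v => g (t, p.1 + sin s • p.2, v)) (g := fun w => NN p.2 w)]
    conv_rhs => rw [← gm_rotation d s]
    rw [integral_map (continuous_rot s).aemeasurable]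
    · rfl
    · refine Continuous.aestronglyMeasurable ?_
      have := hg.continuous
      unfold NN
      fun_prop
  rw [Om] at hI ⊢
  have hI2 := hI.integral_prod_left
  rw [integral_prod _ hI]
  simp only [hinner] at hI2 ⊢
  rw [integral_prod_symm _ hI2]
  simp only [integral_mul_const]
  have : ∀ z : V d, ∫ x, (∫ v, g (t, x + sin s • z, v) ∂gm d) ∂km d = J g t := by
    intro z
    rw [J_eq hg]
    exact km_shift d (fun x => ∫ v, g (t, x, v) ∂gm d) (slice_per hg t) _
  simp only [this, integral_const_mul]
  have hN := integrable_NN (d := d)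
  rw [mu] at hN ⊢
  rw [integral_prod _ hN]

/-- The endpoints of the path are independent, with law `μ`. -/
lemma integral_product {f g : Q d → ℝ} (hf : Nice f) (hg : Nice g) (t : ℝ) :
    ∫ a : (V d × V d) × (V d × V d), f (t, a.1.1, a.2.1) * g (t, a.1.1 + a.1.2, a.2.2) ∂Om d
      = J f t * J g t := by
  have hI : Integrable (fun a : (V d × V d) × (V d × V d) =>
      f (t, a.1.1, a.2.1) * g (t, a.1.1 + a.1.2, a.2.2)) (Om d) := by
    obtain ⟨C, hC⟩ := hf.bounded
    have hc : Continuous fun a : (V d × V d) × (V d × V d) => f (t, a.1.1, a.2.1) :=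
      hf.continuous.comp (by fun_prop)
    exact (hg.integrable (Om d) (by fun_prop : Continuous fun a : (V d × V d) × (V d × V d) =>
      ((t, a.1.1 + a.1.2, a.2.2) : Q d))).bdd_mul (c := C) hc.aestronglyMeasurable
      (ae_of_all _ fun a => hC _)
  have hinner : ∀ p : V d × V d,
      ∫ y : V d × V d, f (t, p.1, y.1) * g (t, p.1 + p.2, y.2) ∂(gm d).prod (gm d)
        = (∫ v, f (t, p.1, v) ∂gm d) * ∫ w, g (t, p.1 + p.2, w) ∂gm d := fun p =>
    integral_prod_mul (f := fun v => f (t, p.1, v)) (g := fun w => g (t, p.1 + p.2, w))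
  rw [Om] at hI ⊢
  have hI2 := hI.integral_prod_left
  rw [integral_prod _ hI]
  simp only [hinner] at hI2 ⊢
  rw [integral_prod _ hI2]
  have : ∀ x : V d, ∫ z, (∫ v, g (t, x + z, v) ∂gm d) ∂km d = J g t := by
    intro x
    rw [J_eq hg]
    simp only [add_comm x]
    exact km_shift d (fun x => ∫ v, g (t, x, v) ∂gm d) (slice_per hg t) _
  simp only [integral_const_mul, this, integral_mul_const]
  rw [J_eq hf]

lemma hasDerivAt_pth (t s : ℝ) (a : (V d × V d) × (V d × V d)) :
    HasDerivAt (fun s => pth t s a) (vel s a) s := by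
  refine (hasDerivAt_const s t).prodMk (HasDerivAt.prodMk ?_ ?_)
  · exact ((hasDerivAt_sin s).smul_const a.1.2).const_add a.1.1
  · exact ((hasDerivAt_cos s).smul_const a.2.1).add ((hasDerivAt_sin s).smul_const a.2.2)

lemma norm_vel_le (s : ℝ) (a : (V d × V d) × (V d × V d)) :
    ‖vel s a‖ ≤ ‖a.1.2‖ + (‖a.2.1‖ + ‖a.2.2‖) := by
  have hs := abs_sin_le_one s
  have hc := abs_cos_le_one s
  have h1 : ‖cos s • a.1.2‖ ≤ ‖a.1.2‖ := by
    rw [norm_smul]; exact mul_le_of_le_one_left (norm_nonneg _) hc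
  have h2 : ‖(ContinuousLinearMap.rotation s a.2).2‖ ≤ ‖a.2.1‖ + ‖a.2.2‖ := by
    rw [ContinuousLinearMap.rotation_apply]
    refine (norm_add_le _ _).trans (add_le_add ?_ ?_)
    · rw [norm_smul, norm_neg]; exact mul_le_of_le_one_left (norm_nonneg _) hs
    · rw [norm_smul]; exact mul_le_of_le_one_left (norm_nonneg _) hc
  have := norm_nonneg a.1.2
  have := norm_nonneg a.2.1
  have := norm_nonneg a.2.2
  simp only [vel, Prod.norm_def, norm_zero]
  refine max_le (by positivity) (max_le (by linarith) (by linarith))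

/-- A Poincaré inequality for `μ`, with a non-optimal constant, by path interpolation
(Maurey–Pisier): the mean square `φ s` of the increment of `f` along `pth` satisfies
`φ' ≤ φ + K`, and `φ (π/2)` is twice the variance. -/
lemma poincare {f : Q d → ℝ} (hf : Nice f) (t : ℝ) :
    J (fun q => f q * f q) t - J f t ^ 2
      ≤ rexp (π / 2) * (∫ p, NN p.1 p.2 ∂mu d) * J (SS f) t := by
  obtain ⟨C, hC⟩ := hf.bounded
  obtain ⟨D, hD0, hD⟩ := hf.fderiv_bounded
  have hC0 : 0 ≤ C := (abs_nonneg _).trans (hC 0)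
  set K := J (SS f) t * ∫ p, NN p.1 p.2 ∂mu d with hK
  have hK0 : 0 ≤ K := mul_nonneg (integral_nonneg fun z => SS_nonneg f _)
    (integral_nonneg fun p => NN_nonneg _ _)
  set φ : ℝ → ℝ := fun s => ∫ a, (f (pth t s a) - f (pth t 0 a)) ^ 2 ∂Om d with hφ
  set φ' : ℝ → ℝ := fun s => ∫ a, 2 * (f (pth t s a) - f (pth t 0 a))
    * fderiv ℝ f (pth t s a) (vel s a) ∂Om d with hφ'
  have hcont : ∀ s, Continuous fun a => f (pth t s a) := fun s =>
    hf.continuous.comp (continuous_pth t s)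
  have hcfd : ∀ s, Continuous fun a => fderiv ℝ f (pth t s a) (vel s a) := fun s =>
    ((hf.smooth.continuous_fderiv (by simp)).comp (continuous_pth t s)).clm_apply (continuous_vel s)
  have hdiff2 : ∀ s a, |f (pth t s a) - f (pth t 0 a)| ≤ 2 * C := fun s a => by
    have := hC (pth t s a); have := hC (pth t 0 a)
    refine (abs_sub _ _).trans (by linarith)
  have hsqint : ∀ s, Integrable (fun a => (f (pth t s a) - f (pth t 0 a)) ^ 2) (Om d) := fun s =>
    Integrable.of_bound (((hcont s).sub (hcont 0)).pow 2).aestronglyMeasurable ((2 * C) ^ 2)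
      (ae_of_all _ fun a => by
        rw [norm_pow]; exact pow_le_pow_left₀ (norm_nonneg _) (hdiff2 s a) 2)
  have hbint : Integrable (fun a : (V d × V d) × (V d × V d) =>
      2 * (2 * C) * (D * (‖a.1.2‖ + (‖a.2.1‖ + ‖a.2.2‖)))) (Om d) := by
    refine Integrable.const_mul (Integrable.const_mul (Integrable.add ?_ ?_) _) _
    · exact (integrable_norm_km.comp_snd (km d)).comp_fst _
    · exact ((integrable_norm_gm.comp_fst (gm d)).add (integrable_norm_gm.comp_snd (gm d))).comp_snd _
  have hbound : ∀ s a, ‖2 * (f (pth t s a) - f (pth t 0 a)) * fderiv ℝ f (pth t s a) (vel s a)‖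
      ≤ 2 * (2 * C) * (D * (‖a.1.2‖ + (‖a.2.1‖ + ‖a.2.2‖))) := by
    intro s a
    rw [norm_mul, norm_mul, Real.norm_ofNat]
    refine mul_le_mul (mul_le_mul_of_nonneg_left (hdiff2 s a) (by norm_num)) ?_ (norm_nonneg _)
      (by positivity)
    refine (ContinuousLinearMap.le_opNorm _ _).trans ?_
    exact mul_le_mul (hD _) (norm_vel_le s a) (norm_nonneg _) hD0
  have hmeas' : ∀ s, AEStronglyMeasurable (fun a => 2 * (f (pth t s a) - f (pth t 0 a))
      * fderiv ℝ f (pth t s a) (vel s a)) (Om d) := fun s =>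
    ((continuous_const.mul ((hcont s).sub (hcont 0))).mul (hcfd s)).aestronglyMeasurable
  have hder : ∀ s, HasDerivAt φ (φ' s) s := by
    intro s
    refine (hasDerivAt_integral_of_dominated_loc_of_deriv_le (x₀ := s)
      (F := fun s a => (f (pth t s a) - f (pth t 0 a)) ^ 2)
      (F' := fun s a => 2 * (f (pth t s a) - f (pth t 0 a)) * fderiv ℝ f (pth t s a) (vel s a))
      univ_mem (Eventually.of_forall fun r => (hsqint r).aestronglyMeasurable) (hsqint s)
      (hmeas' s) (ae_of_all _ fun a r _ => hbound r a) hbint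
      (ae_of_all _ fun a r _ => ?_)).2
    have h1 : HasDerivAt (fun s => f (pth t s a)) (fderiv ℝ f (pth t r a) (vel r a)) r :=
      (hf.diff _).hasFDerivAt.comp_hasDerivAt r (hasDerivAt_pth t r a)
    exact ((h1.sub_const (f (pth t 0 a))).pow 2).congr_deriv (by simp)
  have hle : ∀ s, φ' s ≤ φ s + K := by
    intro s
    rw [hK, ← integral_invariant (nice_SS hf) t s, hφ, hφ',
      ← integral_add (hsqint s) (integrable_bdd_mul_NN (nice_SS hf) t s)]
    refine integral_mono (hbint.mono' (hmeas' s) (ae_of_all _ (hbound s)))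
      ((hsqint s).add (integrable_bdd_mul_NN (nice_SS hf) t s)) fun a => ?_
    have h1 := fderiv_sq_le f (pth t s a) (cos s • a.1.2) (ContinuousLinearMap.rotation s a.2).2
    have h2 : NN (cos s • a.1.2) (ContinuousLinearMap.rotation s a.2).2
        ≤ NN a.1.2 (ContinuousLinearMap.rotation s a.2).2 := by
      refine Finset.sum_le_sum fun i _ => add_le_add_left ?_ _
      simp only [Pi.smul_apply, smul_eq_mul, mul_pow]
      exact mul_le_of_le_one_left (sq_nonneg _) (cos_sq_le_one s)
    have h3 := mul_le_mul_of_nonneg_left h2 (SS_nonneg f (pth t s a))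
    change 2 * (f (pth t s a) - f (pth t 0 a)) * fderiv ℝ f (pth t s a) (vel s a) ≤ _
    have h4 : fderiv ℝ f (pth t s a) (vel s a) ^ 2 ≤ SS f (pth t s a) *
      NN (cos s • a.1.2) (ContinuousLinearMap.rotation s a.2).2 := h1
    nlinarith [sq_nonneg ((f (pth t s a) - f (pth t 0 a)) - fderiv ℝ f (pth t s a) (vel s a))]
  have hG := gronwall_exp (F := fun s => φ s + K) (a := 1)
    (fun s _ => (hder s).add_const K) (fun s _ => by linarith [hle s]) (π / 2) (by positivity)
  have hφ0 : φ 0 = 0 := by simp [hφ]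
  have hend : φ (π / 2) = 2 * (J (fun q => f q * f q) t - J f t ^ 2) := by
    have h1 := integral_product hf hf t
    have h2 := integral_product (hf.mul hf) (Nice.const 1) t
    have h3 := integral_product (Nice.const 1) (hf.mul hf) t
    have hJ1 : J (fun _ : Q d => (1:ℝ)) t = 1 := by simp [J]
    rw [hJ1] at h2 h3
    have hc1 : Continuous fun a : (V d × V d) × (V d × V d) => ((t, a.1.1, a.2.1) : Q d) := by fun_prop
    have hc2 : Continuous fun a : (V d × V d) × (V d × V d) =>
      ((t, a.1.1 + a.1.2, a.2.2) : Q d) := by fun_prop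
    have i2 := (hf.mul hf).integrable (Om d) hc1
    have i3 := (hf.mul hf).integrable (Om d) hc2
    have i1 : Integrable (fun a : (V d × V d) × (V d × V d) =>
        f (t, a.1.1, a.2.1) * f (t, a.1.1 + a.1.2, a.2.2)) (Om d) :=
      (hf.integrable (Om d) hc2).bdd_mul (c := C)
        (hf.continuous.comp hc1).aestronglyMeasurable (ae_of_all _ fun a => hC _)
    simp only [mul_one, one_mul] at h2 h3
    have hexp : ∀ a : (V d × V d) × (V d × V d), (f (pth t (π / 2) a) - f (pth t 0 a)) ^ 2
        = f (t, a.1.1, a.2.1) * f (t, a.1.1, a.2.1)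
          + f (t, a.1.1 + a.1.2, a.2.2) * f (t, a.1.1 + a.1.2, a.2.2)
          - 2 * (f (t, a.1.1, a.2.1) * f (t, a.1.1 + a.1.2, a.2.2)) := by
      intro a
      simp [pth, ContinuousLinearMap.rotation_apply]; ring
    simp only [hφ, hexp]
    rw [integral_sub (by exact i2.add i3) (i1.const_mul 2), integral_add i2 i3,
      integral_const_mul, h1, h2, h3]
    ring
  simp only [hφ0, hend, one_mul, zero_add] at hG
  have h5 : rexp (π / 2) * (∫ p, NN p.1 p.2 ∂mu d) * J (SS f) t = rexp (π / 2) * K := by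
    rw [hK]; ring
  rw [h5]
  have : 0 ≤ rexp (π / 2) * K := by positivity
  linarith

/-! ### Derivatives and equation in terms of directional derivatives -/

lemma gradx_eq {f : Q d → ℝ} (hf : Nice f) (t : ℝ) (x v : V d) (i : Fin d) :
    gradx d (fun x v => f (t, x, v)) x v i = Dr (eX i) f (t, x, v) := by
  have h1 : HasFDerivAt (fun x : V d => ((t, x, v) : Q d))
      ((ContinuousLinearMap.inr ℝ ℝ (V d × V d)).comp (ContinuousLinearMap.inl ℝ (V d) (V d))) x :=
    ((hasFDerivAt_const t x).prodMk ((hasFDerivAt_id x).prodMk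
      (hasFDerivAt_const v x))).congr_fderiv (by ext <;> simp)
  simp only [gradx]
  have h2 := ((hf.diff (t, x, v)).hasFDerivAt.comp x h1).fderiv
  exact congrArg (fun L : V d →L[ℝ] ℝ => L (Pi.single i 1)) h2

lemma gradv_eq {f : Q d → ℝ} (hf : Nice f) (t : ℝ) (x v : V d) (i : Fin d) :
    gradv d (fun x v => f (t, x, v)) x v i = Dr (eV i) f (t, x, v) := by
  have h1 : HasFDerivAt (fun v : V d => ((t, x, v) : Q d))
      ((ContinuousLinearMap.inr ℝ ℝ (V d × V d)).comp (ContinuousLinearMap.inr ℝ (V d) (V d))) v :=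
    ((hasFDerivAt_const t v).prodMk ((hasFDerivAt_const x v).prodMk
      (hasFDerivAt_id v))).congr_fderiv (by ext <;> simp)
  simp only [gradv]
  have h2 := ((hf.diff (t, x, v)).hasFDerivAt.comp v h1).fderiv
  exact congrArg (fun L : V d →L[ℝ] ℝ => L (Pi.single i 1)) h2

lemma lapv_eq {f : Q d → ℝ} (hf : Nice f) (t : ℝ) (x v : V d) :
    lapv d (fun x v => f (t, x, v)) x v = ∑ i, Dr (eV i) (Dr (eV i) f) (t, x, v) := by
  simp only [lapv, gradv_eq hf]
  exact Finset.sum_congr rfl fun i _ => gradv_eq (hf.dr (eV i)) t x v i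

lemma deriv_time_eq {f : Q d → ℝ} (hf : Nice f) (t : ℝ) (x v : V d) :
    deriv (fun s => f (s, x, v)) t = Dr (eT d) f (t, x, v) := by
  have h1 : HasDerivAt (fun s : ℝ => ((s, x, v) : Q d)) (eT d) t :=
    (hasDerivAt_id t).prodMk (hasDerivAt_const t (x, v))
  exact ((hf.diff (t, x, v)).hasFDerivAt.comp_hasDerivAt t h1).deriv

lemma nice_of_regular {h : ℝ → V d → V d → ℝ} (hr : Regular d h) :
    Nice (fun q : Q d => h q.1 q.2.1 q.2.2) :=
  ⟨hr.1, hr.2.2.2, fun q k => by simpa using hr.2.1 q.1 q.2.1 q.2.2 k⟩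

lemma LL_eq_zero_of_solves {U : Q d → ℝ} (hU : Nice U)
    (hs : SolvesKFP d fun t x v => U (t, x, v)) (q : Q d) (hq : 0 ≤ q.1) : LL U q = 0 := by
  obtain ⟨t, x, v⟩ := q
  have := hs t x v hq
  rw [deriv_time_eq hU, lapv_eq hU] at this
  simp only [dotp, gradx_eq hU, gradv_eq hU] at this
  simp only [LL]
  linarith

/-! ### The twisted functional and its dissipation -/

/-- The density of the `p`-entropy, `(U^p - U)/(p(p-1))`. -/
def ent (p : ℝ) (U : Q d → ℝ) (q : Q d) : ℝ := (p * (p - 1))⁻¹ * (U q ^ p + (-1) * U q)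

/-- The density of the `p`-Fisher information, `U^{p-2} |∇_{x,v} U|²`. -/
def fis (p : ℝ) (U : Q d → ℝ) (q : Q d) : ℝ := U q ^ (p - 2) * SS U q

/-- `∑ⱼ U^{p-2} (|∂_{xⱼ}U|² + |∂_{vⱼ}U|² + |∂_{xⱼ}U + ∂_{vⱼ}U|²)`, a twisted Fisher information
density equivalent to `fis`. -/
def tw (p : ℝ) (U : Q d → ℝ) (q : Q d) : ℝ :=
  ∑ j, (U q ^ (p - 2) * (Dr (eX j) U q * Dr (eX j) U q)
    + (U q ^ (p - 2) * (Dr (eV j) U q * Dr (eV j) U q)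
      + U q ^ (p - 2) * (Dr (eX j + eV j) U q * Dr (eX j + eV j) U q)))

section functional
variable {U : Q d → ℝ} {c p : ℝ}

lemma nice_ent (hU : Nice U) (hc : 0 < c) (hUc : ∀ q, c ≤ U q) : Nice (ent p U) :=
  ((hU.rpow hc hUc p).add (hU.const_mul (-1))).const_mul _

lemma nice_fis (hU : Nice U) (hc : 0 < c) (hUc : ∀ q, c ≤ U q) : Nice (fis p U) :=
  (hU.rpow hc hUc (p - 2)).mul (nice_SS hU)

lemma nice_quad (hU : Nice U) (hc : 0 < c) (hUc : ∀ q, c ≤ U q) (e : Q d) :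
    Nice (fun q => U q ^ (p - 2) * (Dr e U q * Dr e U q)) :=
  (hU.rpow hc hUc (p - 2)).mul ((hU.dr e).mul (hU.dr e))

lemma nice_tw (hU : Nice U) (hc : 0 < c) (hUc : ∀ q, c ≤ U q) : Nice (tw p U) :=
  Nice.sum _ fun j => (nice_quad hU hc hUc (eX j)).add
    ((nice_quad hU hc hUc (eV j)).add (nice_quad hU hc hUc (eX j + eV j)))

lemma fis_nonneg (hc : 0 < c) (hUc : ∀ q, c ≤ U q) (q : Q d) : 0 ≤ fis p U q :=
  mul_nonneg (Real.rpow_nonneg (hc.le.trans (hUc q)) _) (SS_nonneg U q)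

lemma fis_le_tw (hc : 0 < c) (hUc : ∀ q, c ≤ U q) (q : Q d) : fis p U q ≤ tw p U q := by
  have hw : 0 ≤ U q ^ (p - 2) := Real.rpow_nonneg (hc.le.trans (hUc q)) _
  simp only [fis, tw, SS, Finset.mul_sum]
  refine Finset.sum_le_sum fun j _ => ?_
  nlinarith [mul_nonneg hw (mul_self_nonneg (Dr (eX j + eV j) U q))]

lemma tw_le_fis (hc : 0 < c) (hUc : ∀ q, c ≤ U q) (q : Q d) : tw p U q ≤ 3 * fis p U q := by
  have hw : 0 ≤ U q ^ (p - 2) := Real.rpow_nonneg (hc.le.trans (hUc q)) _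
  simp only [fis, tw, SS, Finset.mul_sum]
  refine Finset.sum_le_sum fun j _ => ?_
  rw [Dr_add_dir]
  nlinarith [mul_nonneg hw (mul_self_nonneg (Dr (eX j) U q - Dr (eV j) U q))]

/-- Pointwise dissipation: `LL` of the twisted functional is at most minus the full Fisher
information density.  With `ξ = ∂_{xⱼ}U`, `η = ∂_{vⱼ}U` the commutators produce
`-2ξ² - 6ξη - 4η²`, the entropy adds `-(27/2)η²`, and
`ξ² + 6ξη + (33/2)η² ≥ 0` leaves a gain of `ξ² + η²`. -/
lemma LL_functional_le (hU : Nice U) (hc : 0 < c) (hUc : ∀ q, c ≤ U q) (hp1 : 1 < p) (hp2 : p ≤ 2)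
    (hL : ∀ q : Q d, 0 ≤ q.1 → LL U q = 0) (q : Q d) (hq : 0 ≤ q.1) :
    LL (fun q => tw p U q + 27 / 2 * ent p U q) q ≤ -1 * fis p U q := by
  have hw : 0 ≤ U q ^ (p - 2) := Real.rpow_nonneg (hc.le.trans (hUc q)) _
  have hpp : p * (p - 1) ≠ 0 := (mul_pos (by linarith) (by linarith)).ne'
  have hE : LL (ent p U) q = -(U q ^ (p - 2) * ∑ i, Dr (eV i) U q ^ 2) := by
    have : ent p U = fun q => (p * (p - 1))⁻¹ * (U q ^ p + (-1) * U q) := rfl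
    rw [this, LL_const_mul _ ((hU.rpow hc hUc p).add (hU.const_mul (-1))),
      LL_add (hU.rpow hc hUc p) (hU.const_mul (-1)), LL_const_mul _ hU, LL_rpow hU hc hUc, hL q hq]
    linear_combination (-(U q ^ (p - 2) * ∑ i, Dr (eV i) U q ^ 2)) * inv_mul_cancel₀ hpp
  have hT : LL (tw p U) q ≤ ∑ j, (0 + (2 * U q ^ (p - 2) * Dr (eV j) U q
      * (-(Dr (eX j) U q + Dr (eV j) U q)) + 2 * U q ^ (p - 2) * (Dr (eX j) U q + Dr (eV j) U q)
      * (-(Dr (eX j) U q + Dr (eV j) U q)))) := by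
    have : tw p U = fun q => ∑ j, (U q ^ (p - 2) * (Dr (eX j) U q * Dr (eX j) U q)
      + (U q ^ (p - 2) * (Dr (eV j) U q * Dr (eV j) U q)
      + U q ^ (p - 2) * (Dr (eX j + eV j) U q * Dr (eX j + eV j) U q))) := rfl
    rw [this, LL_sum _ fun j => (nice_quad hU hc hUc (eX j)).add
      ((nice_quad hU hc hUc (eV j)).add (nice_quad hU hc hUc (eX j + eV j)))]
    refine Finset.sum_le_sum fun j _ => ?_
    rw [LL_add (nice_quad hU hc hUc (eX j))
      ((nice_quad hU hc hUc (eV j)).add (nice_quad hU hc hUc (eX j + eV j))),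
      LL_add (nice_quad hU hc hUc (eV j)) (nice_quad hU hc hUc (eX j + eV j))]
    have b := fun e : Q d => LL_quad_le hU (hU.dr e) hc hUc hp1 hp2 q (hL q hq)
    have bX := b (eX j)
    have bV := b (eV j)
    have bW := b (eX j + eV j)
    have lX : LL (Dr (eX j) U) q = 0 := by
      rw [LL_Dr hU hL _ q rfl hq]; simp [eX]
    have lV : LL (Dr (eV j) U) q = -(Dr (eX j) U q + Dr (eV j) U q) := by
      rw [LL_Dr hU hL _ q rfl hq]
      simp [show (eV j : Q d).2.2 = Pi.single j 1 from rfl, Pi.single_apply, add_comm]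
    have lW : LL (Dr (eX j + eV j) U) q = -(Dr (eX j) U q + Dr (eV j) U q) := by
      rw [LL_Dr hU hL _ q (by simp [eX, eV]) hq,
        show (eX j + eV j : Q d).2.2 = Pi.single j 1 from zero_add _]
      simp [Pi.single_apply, add_comm]
    rw [lX] at bX
    rw [lV] at bV
    rw [lW, Dr_add_dir] at bW
    linarith
  rw [LL_add (nice_tw hU hc hUc) ((nice_ent hU hc hUc).const_mul _),
    LL_const_mul _ (nice_ent hU hc hUc), hE]
  refine (add_le_add_left hT _).trans ?_
  simp only [fis, SS, Finset.mul_sum, ← Finset.sum_neg_distrib, ← Finset.sum_add_distrib]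
  refine Finset.sum_le_sum fun j _ => ?_
  nlinarith [mul_nonneg hw (sq_nonneg (Dr (eX j) U q + 3 * Dr (eV j) U q)),
    mul_nonneg hw (sq_nonneg (Dr (eV j) U q))]

end functional

/-! ### Beckner's inequality and exponential decay -/

lemma J_mono {f g : Q d → ℝ} (hf : Nice f) (hg : Nice g) (h : ∀ q, f q ≤ g q) (t : ℝ) :
    J f t ≤ J g t :=
  integral_mono (hf.integrable_mu t) (hg.integrable_mu t) fun z => h (t, z)

lemma J_add {f g : Q d → ℝ} (hf : Nice f) (hg : Nice g) (t : ℝ) :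
    J (fun q => f q + g q) t = J f t + J g t :=
  integral_add (hf.integrable_mu t) (hg.integrable_mu t)

lemma J_const_mul (c : ℝ) (f : Q d → ℝ) (t : ℝ) : J (fun q => c * f q) t = c * J f t :=
  integral_const_mul _ _

lemma J_const (c : ℝ) (t : ℝ) : J (fun _ : Q d => c) t = c := by
  simp [J]

/-- The constant in the Beckner inequality `H^{(p)} ≤ K I^{(p)}`. -/
def bk (d : ℕ) (p : ℝ) : ℝ :=
  (p * (p - 1))⁻¹ * ((p / 2) ^ 2 * (rexp (π / 2) * ∫ z, NN z.1 z.2 ∂mu d))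

lemma bk_nonneg {p : ℝ} (hp1 : 1 < p) : 0 ≤ bk d p := by
  have h0 : 0 ≤ ∫ z, NN z.1 z.2 ∂mu d := integral_nonneg fun z => NN_nonneg _ _
  have : 0 < p * (p - 1) := mul_pos (by linarith) (by linarith)
  unfold bk
  positivity

/-- Beckner's inequality: the Poincaré inequality applied to `U^{p/2}`, whose mean is at most `1`
by Bernoulli's inequality. -/
lemma beckner {U : Q d → ℝ} {c p : ℝ} (hU : Nice U) (hc : 0 < c) (hUc : ∀ q, c ≤ U q) (hp1 : 1 < p)
    (hp2 : p ≤ 2) (t : ℝ) (hm : J U t = 1) : J (ent p U) t ≤ bk d p * J (fis p U) t := by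
  have hpos : ∀ q, 0 < U q := fun q => hc.trans_le (hUc q)
  have hpp : 0 < p * (p - 1) := mul_pos (by linarith) (by linarith)
  have hf := hU.rpow hc hUc (p / 2)
  have hP := poincare hf t
  have e1 : (fun q => U q ^ (p / 2) * U q ^ (p / 2)) = fun q => U q ^ p := by
    funext q
    rw [← Real.rpow_add (hpos q)]; congr 1; ring
  have e2 : SS (fun q => U q ^ (p / 2)) = fun q => (p / 2) ^ 2 * fis p U q := by
    funext q
    have : U q ^ (p - 2) = U q ^ (p / 2 - 1) * U q ^ (p / 2 - 1) := by
      rw [← Real.rpow_add (hpos q)]; congr 1; ring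
    simp only [SS, fis, Dr_rpow hU hc hUc, this, Finset.mul_sum]
    exact Finset.sum_congr rfl fun j _ => by ring
  rw [e1, e2, J_const_mul] at hP
  have hJ0 : 0 ≤ J (fun q => U q ^ (p / 2)) t :=
    integral_nonneg fun z => Real.rpow_nonneg (hpos _).le _
  have hJ1 : J (fun q => U q ^ (p / 2)) t ≤ 1 := by
    have h1 := J_mono hf ((Nice.const (1 - p / 2)).add (hU.const_mul (p / 2))) (fun q => by
      have := rpow_one_add_le_one_add_mul_self (s := U q - 1) (by linarith [hpos q])
        (p := p / 2) (by linarith) (by linarith)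
      rw [add_sub_cancel] at this
      linarith) t
    rw [J_add (Nice.const _) (hU.const_mul _), J_const, J_const_mul, hm] at h1
    linarith
  have hE : J (ent p U) t = (p * (p - 1))⁻¹ * (J (fun q => U q ^ p) t - 1) := by
    have : ent p U = fun q => (p * (p - 1))⁻¹ * (U q ^ p + (-1) * U q) := rfl
    rw [this, J_const_mul, J_add (hU.rpow hc hUc p) (hU.const_mul _), J_const_mul, hm]
    ring
  rw [hE, bk, mul_assoc]
  refine mul_le_mul_of_nonneg_left ?_ (inv_nonneg.2 hpp.le)
  nlinarith

lemma Hp_eq {U : Q d → ℝ} {c p : ℝ} (hU : Nice U) (hc : 0 < c) (hUc : ∀ q, c ≤ U q) (t : ℝ) :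
    Hp d p (fun x v => U (t, x, v)) = J (ent p U) t := by
  have e : ∀ z : V d × V d, (U (t, z.1, z.2) ^ p - U (t, z.1, z.2)) / (p * (p - 1))
      = ent p U (t, z) := fun z => by simp only [ent]; ring
  rw [Hp, intMu_eq]
  · simp only [e]; rfl
  · simp only [e]; exact (nice_ent hU hc hUc).integrable_mu t

lemma Ipfull_eq {U : Q d → ℝ} {c p : ℝ} (hU : Nice U) (hc : 0 < c) (hUc : ∀ q, c ≤ U q) (t : ℝ) :
    Ipfull d p (fun x v => U (t, x, v)) = J (fis p U) t := by
  have e : ∀ z : V d × V d, U (t, z.1, z.2) ^ (p - 2)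
      * (nsq d (gradx d (fun x v => U (t, x, v)) z.1 z.2)
        + nsq d (gradv d (fun x v => U (t, x, v)) z.1 z.2)) = fis p U (t, z) := fun z => by
    simp only [fis, nsq, gradx_eq hU, gradv_eq hU, SS, Finset.sum_add_distrib, pow_two]
  rw [Ipfull, intMu_eq]
  · simp only [e]; rfl
  · simp only [e]; exact (nice_fis hU hc hUc).integrable_mu t

/-- Entropy–entropy production: the functional `F = ∫ (tw + (27/2) ent) dμ` satisfies `F' ≤ -I^{(p)}`
and `F ≤ (3 + (27/2) K) I^{(p)}` by Beckner's inequality, hence decays exponentially. -/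
lemma decay {U : Q d → ℝ} {c p : ℝ} (hU : Nice U) (hc : 0 < c) (hUc : ∀ q, c ≤ U q) (hp1 : 1 < p)
    (hp2 : p ≤ 2) (hm : ∀ t, 0 ≤ t → J U t = 1) (hL : ∀ q : Q d, 0 ≤ q.1 → LL U q = 0)
    (t : ℝ) (ht : 0 ≤ t) :
    J (fis p U) t + 27 / 2 * J (ent p U) t
      ≤ rexp (-(3 + 27 / 2 * bk d p)⁻¹ * t) * (3 * J (fis p U) 0 + 27 / 2 * J (ent p U) 0) := by
  have hK := bk_nonneg (d := d) hp1
  have nE : Nice (ent p U) := nice_ent hU hc hUc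
  have nI : Nice (fis p U) := nice_fis hU hc hUc
  have nT : Nice (tw p U) := nice_tw hU hc hUc
  have nF := nT.add (nE.const_mul (27 / 2))
  have hF : ∀ t, J (fun q => tw p U q + 27 / 2 * ent p U q) t
      = J (tw p U) t + 27 / 2 * J (ent p U) t := fun t => by
    rw [J_add nT (nE.const_mul _), J_const_mul]
  have hlow : ∀ t, J (fis p U) t ≤ J (tw p U) t := J_mono nI nT (fis_le_tw hc hUc)
  have hupp : ∀ t, J (tw p U) t ≤ 3 * J (fis p U) t := fun t => by
    rw [← J_const_mul]; exact J_mono nT (nI.const_mul 3) (tw_le_fis hc hUc) t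
  have hG := gronwall_exp (F := J fun q => tw p U q + 27 / 2 * ent p U q)
    (a := -(3 + 27 / 2 * bk d p)⁻¹) (fun t _ => hasDerivAt_J nF t) (fun t ht => ?_) t ht
  · rw [hF, hF] at hG
    have := mul_le_mul_of_nonneg_left (add_le_add_left (hupp 0) (27 / 2 * J (ent p U) 0))
      (exp_pos (-(3 + 27 / 2 * bk d p)⁻¹ * t)).le
    linarith [hlow t]
  · have h1 : ∫ z, LL (fun q => tw p U q + 27 / 2 * ent p U q) (t, z) ∂mu d
        ≤ J (fun q => -1 * fis p U q) t :=
      integral_mono (integrable_LL nF t) ((nI.const_mul (-1)).integrable_mu t)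
        fun z => LL_functional_le hU hc hUc hp1 hp2 hL (t, z) ht
    rw [J_const_mul] at h1
    have h2 : J (tw p U) t + 27 / 2 * J (ent p U) t
        ≤ (3 + 27 / 2 * bk d p) * J (fis p U) t := by
      linarith [hupp t, beckner hU hc hUc hp1 hp2 t (hm t ht)]
    have h3 : (3 + 27 / 2 * bk d p)⁻¹ * (J (tw p U) t + 27 / 2 * J (ent p U) t)
        ≤ J (fis p U) t := by
      rw [inv_mul_le_iff₀ (by positivity)]; exact h2
    rw [hF]
    linarith

end

/-- `p`-entropy hypocoercivity for the kinetic Fokker–Planck equation: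
for `p ∈ (1,2]` there is `k > 0` such that any suitably regular normalized solution satisfies
`I^{(p)}(h_t) + (27/2) H^{(p)}(h_t) ≤ e^{-kt} (3 I^{(p)}(h_0) + (27/2) H^{(p)}(h_0))`;
consequently there is `C` with `H^{(p)}(h_t) ≤ C e^{-kt} I^{(p)}(h_0)`. -/
theorem kinetic_fokker_planck_p_entropy_hypocoercivity
    (d : ℕ) (hd : 1 ≤ d) (p : ℝ) (hp1 : 1 < p) (hp2 : p ≤ 2) :
    ∃ k C : ℝ, 0 < k ∧ 0 < C ∧
      ∀ h : ℝ → (Fin d → ℝ) → (Fin d → ℝ) → ℝ,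
        Regular d h →
        (∀ t, 0 ≤ t → intMu d (h t) = 1) →
        SolvesKFP d h →
        ∀ t : ℝ, 0 ≤ t →
          Ipfull d p (h t) + (27 / 2) * Hp d p (h t)
              ≤ Real.exp (-k * t) * (3 * Ipfull d p (h 0) + (27 / 2) * Hp d p (h 0)) ∧
          Hp d p (h t) ≤ C * Real.exp (-k * t) * Ipfull d p (h 0) := by
  have hK := bk_nonneg (d := d) hp1
  refine ⟨(3 + 27 / 2 * bk d p)⁻¹, 2 / 27 * (3 + 27 / 2 * bk d p), by positivity, by positivity,
    fun h hr hm hs t ht => ?_⟩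
  have hU := nice_of_regular hr
  obtain ⟨c, C, hc, hcC⟩ := hr.2.2.1
  set U : Q d → ℝ := fun q => h q.1 q.2.1 q.2.2 with hUdef
  have hUc : ∀ q, c ≤ U q := fun q => (hcC q.1 q.2.1 q.2.2).1
  have hmass : ∀ t, 0 ≤ t → J U t = 1 := fun t ht => by
    rw [← hm t ht, intMu_eq d (h t) (hU.integrable_mu t)]; rfl
  have eH : ∀ t, Hp d p (h t) = J (ent p U) t := Hp_eq hU hc hUc
  have eI : ∀ t, Ipfull d p (h t) = J (fis p U) t := Ipfull_eq hU hc hUc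
  have hdec := decay hU hc hUc hp1 hp2 hmass (LL_eq_zero_of_solves hU hs) t ht
  simp only [eH, eI]
  refine ⟨hdec, ?_⟩
  have hI : 0 ≤ J (fis p U) t := integral_nonneg fun z => fis_nonneg hc hUc _
  have hB := beckner hU hc hUc hp1 hp2 0 (hmass 0 le_rfl)
  have := mul_le_mul_of_nonneg_left (add_le_add_right (mul_le_mul_of_nonneg_left hB
    (by norm_num : (0 : ℝ) ≤ 27 / 2)) (3 * J (fis p U) 0))
      (exp_pos (-(3 + 27 / 2 * bk d p)⁻¹ * t)).le
  linarith
end
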